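/- arXiv:2009.00446 — 5 statements merged into one kernel-verified Lean document; each statement's English description precedes it below -/
import Mathlib

section
/- For every integer n ≥ 1 and every complex number s that is not a nonpositive integer, ∑_{j=0}^{n−1} Γ(2j+s) 𝓔(2j)/Γ(2j+1) = 2^{2n} Γ(s+2n) ∑_{k=0}^{2n−1} (2^{−k} − 2^{2n−2k}) B_{2n−k} / (Γ(k+1) Γ(2n−k+1) (2n−1+s−k)). -/
open Filter

/-- `E j` is the Euler number `𝓔(2j)`, characterized by the convergent series
`∑_{k=0}^∞ (-1)^k (k+1/2)^{-(2j+1)} = (-1)^j π^{2j+1} 𝓔(2j) / (2 Γ(2j+1))`. -/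
def eulerChar (E : ℕ → ℝ) : Prop :=
  ∀ j : ℕ, Filter.Tendsto
    (fun n => ∑ k ∈ Finset.range n, (-1 : ℝ) ^ k / ((k : ℝ) + 1/2) ^ (2*j+1))
    Filter.atTop
    (nhds ((-1 : ℝ) ^ j * Real.pi ^ (2*j+1) * E j / (2 * (Nat.factorial (2*j)))))

/-!
The quotient `Γ(s+a) / Γ(s+N)` is the reciprocal of a product of consecutive shifts of `s`, whose
partial fraction coefficients are alternating binomial coefficients. Collecting the terms with the
same pole turns `∑_{a<N} Γ(s+a) 𝓔(a) / a!` into a sum over the binomial transforms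
`∑_a (-1)^(m-a) C(m,a) 𝓔(a)`. Since `𝓔(a)` is a multiple of `B_{a+1}(3/4) - B_{a+1}(1/4)`, the
addition theorem for Bernoulli polynomials with increment `-1/4` evaluates these transforms as
multiples of `B_{m+1}(1/2) - B_{m+1}(0)`. The Fourier expansion of `B_{2j+1}` at `1/4` identifies
these Euler numbers with those defined by the alternating series.
-/

open Finset
open scoped Nat

section PartialFractions

theorem ascPochhammer_eval_ne_zero {R : Type*} [Semiring R] [Nontrivial R] [NoZeroDivisors R]
    {n : ℕ} {z : R} (hz : ∀ k < n, z + k ≠ 0) : (ascPochhammer R n).eval z ≠ 0 := by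
  induction n with
  | zero => simp
  | succ n ih =>
    rw [ascPochhammer_succ_eval]
    exact mul_ne_zero (ih fun k hk ↦ hz k (hk.trans n.lt_succ_self)) (hz n n.lt_succ_self)

theorem sum_choose_mul_neg_one_pow_div_add {K : Type*} [Field K] {d : ℕ} {z : K}
    (hz : ∀ k ≤ d, z + k ≠ 0) :
    ∑ i ∈ range (d + 1), d.choose i * ((-1) ^ i / (z + i)) =
      d ! / (ascPochhammer K (d + 1)).eval z := by
  induction d generalizing z with
  | zero => simp
  | succ d ih =>
    have hz_zero : z ≠ 0 := by simpa using hz 0 (Nat.zero_le _)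
    have hz_succ : ∀ k ≤ d, z + 1 + k ≠ 0 := fun k hk ↦ by
      simpa [add_assoc, add_comm (1 : K)] using hz (k + 1) (Nat.succ_le_succ hk)
    have eval_succ (n : ℕ) :
        (ascPochhammer K (n + 1)).eval z = z * (ascPochhammer K n).eval (z + 1) := by
      simp [ascPochhammer_succ_left]
    have pascal : ∑ i ∈ range (d + 2), (d + 1).choose i * ((-1) ^ i / (z + i)) =
        ∑ i ∈ range (d + 1), d.choose i * ((-1) ^ i / (z + i)) -
          ∑ i ∈ range (d + 1), d.choose i * ((-1) ^ i / (z + 1 + i)) := by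
      simpa [pow_succ, neg_div, sub_eq_add_neg, add_assoc, add_comm (1 : K)] using
        sum_choose_succ_mul (fun i _ ↦ (-1) ^ i / (z + i)) d
    have eval_ne_zero := ascPochhammer_eval_ne_zero fun k hk ↦ hz_succ k hk.le
    have hz_last := hz_succ d le_rfl
    rw [pascal, ih fun k hk ↦ hz k (Nat.le_succ_of_le hk), ih hz_succ, eval_succ, eval_succ,
      ascPochhammer_succ_eval, Nat.factorial_succ]
    push_cast
    field_simp
    ring

theorem Gamma_eq_mul_sum_choose_div_add (d : ℕ) {z : ℂ} (hz : ∀ k : ℕ, z ≠ -k) :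
    Complex.Gamma z = Complex.Gamma (z + d + 1) *
      ((∑ i ∈ range (d + 1), d.choose i * ((-1) ^ i / (z + i))) / d !) := by
  have hz_add (k : ℕ) : z + k ≠ 0 := fun h ↦ hz k (eq_neg_of_add_eq_zero_left h)
  rw [sum_choose_mul_neg_one_pow_div_add fun k _ ↦ hz_add k,
    ← Complex.Gamma_add_nat_div_Gamma_eq z hz]
  have hΓ : Complex.Gamma (z + d + 1) ≠ 0 :=
    Complex.Gamma_ne_zero fun k h ↦ hz (k + (d + 1)) (by push_cast; linear_combination h)
  have hd : (d ! : ℂ) ≠ 0 := mod_cast d.factorial_ne_zero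
  rw [Nat.cast_succ, ← add_assoc]
  field_simp

theorem Gamma_div_factorial_eq_sum {N a : ℕ} (ha : a < N) {s : ℂ} (hs : ∀ k : ℕ, s ≠ -k) :
    Complex.Gamma (s + a) / a ! = Complex.Gamma (s + N) *
      ∑ i ∈ range (N - a), (-1) ^ i * (a + i).choose a /
        ((a + i)! * (N - 1 - (a + i))! * (s + (a + i : ℕ))) := by
  obtain ⟨d, rfl⟩ := Nat.exists_eq_add_of_lt ha
  have hsa (k : ℕ) : s + a ≠ -k := fun h ↦ hs (a + k) (by push_cast; linear_combination h)
  have hN : s + (a + d + 1 : ℕ) = s + a + d + 1 := by push_cast; ring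
  rw [Gamma_eq_mul_sum_choose_div_add d hsa, hN, mul_div_assoc, sum_div, sum_div,
    show a + d + 1 - a = d + 1 by omega]
  congr 1
  refine sum_congr rfl fun i hi ↦ ?_
  obtain ⟨c, rfl⟩ := Nat.exists_eq_add_of_le (mem_range_succ_iff.mp hi)
  have hfac (k : ℕ) : (k ! : ℂ) ≠ 0 := mod_cast k.factorial_ne_zero
  rw [show a + (i + c) + 1 - 1 - (a + i) = c by omega, Nat.cast_add_choose, Nat.cast_add_choose,
    Nat.cast_add, ← add_assoc s]
  field_simp [hfac]

theorem sum_Gamma_mul_div_factorial (N : ℕ) {s : ℂ} (hs : ∀ k : ℕ, s ≠ -k) (e : ℕ → ℂ) :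
    ∑ a ∈ range N, Complex.Gamma (s + a) * e a / a ! =
      Complex.Gamma (s + N) * ∑ m ∈ range N,
        (∑ a ∈ range (m + 1), (-1) ^ (m - a) * m.choose a * e a) /
          (m ! * (N - 1 - m)! * (s + m)) := by
  let term (a i : ℕ) : ℂ := (-1) ^ i * (a + i).choose a * e a /
    ((a + i)! * (N - 1 - (a + i))! * (s + (a + i : ℕ)))
  calc ∑ a ∈ range N, Complex.Gamma (s + a) * e a / a !
      = ∑ a ∈ range N, Complex.Gamma (s + N) * ∑ i ∈ range (N - a), term a i := by
        refine sum_congr rfl fun a ha ↦ ?_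
        rw [mul_div_right_comm, Gamma_div_factorial_eq_sum (mem_range.mp ha) hs, mul_assoc,
          sum_mul]
        congr! 2
        ring
    _ = Complex.Gamma (s + N) * ∑ m ∈ range N, ∑ a ∈ range (m + 1), term a (m - a) := by
        rw [← mul_sum, sum_range_diag_flip]
    _ = _ := by
        congr! 2 with m
        rw [sum_div]
        refine sum_congr rfl fun a ha ↦ ?_
        simp only [term, Nat.add_sub_cancel' (mem_range_succ_iff.mp ha)]

end PartialFractions

section BernoulliAddition

open Polynomial

theorem hasseDeriv_bernoulli (n k : ℕ) :
    hasseDeriv k (Polynomial.bernoulli n) = n.choose k • Polynomial.bernoulli (n - k) := by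
  ext i
  rw [hasseDeriv_coeff, coeff_bernoulli, coeff_smul, coeff_bernoulli]
  obtain hik | hik := le_or_gt (i + k) n
  · have hchoose : (n.choose (i + k) * (i + k).choose k : ℚ) = n.choose k * (n - k).choose i := by
      exact_mod_cast by simpa using Nat.choose_mul (n := n) (Nat.le_add_left k i)
    rw [if_pos hik, if_pos (Nat.le_sub_of_add_le hik), nsmul_eq_mul, Nat.sub_sub, add_comm k i]
    linear_combination _root_.bernoulli (n - (i + k)) * hchoose
  · obtain hk | hk := le_or_gt k n
    · simp [hik.not_ge, show ¬ i ≤ n - k by omega]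
    · simp [hik.not_ge, Nat.choose_eq_zero_of_lt hk]

theorem aeval_bernoulli_add {A : Type*} [CommRing A] [Algebra ℚ A] (n : ℕ) (x y : A) :
    aeval (x + y) (Polynomial.bernoulli n) =
      ∑ k ∈ range (n + 1), n.choose k * aeval x (Polynomial.bernoulli k) * y ^ (n - k) := by
  set p := (Polynomial.bernoulli n).map (algebraMap ℚ A)
  have hasse_map (k : ℕ) : hasseDeriv k p =
      (hasseDeriv k (Polynomial.bernoulli n)).map (algebraMap ℚ A) := by
    ext i
    simp [p, hasseDeriv_coeff]
  have hdeg : p.natDegree < n + 1 := by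
    rw [Nat.lt_succ_iff, natDegree_le_iff_coeff_eq_zero]
    intro i hi
    simp [p, coeff_bernoulli, hi.not_ge]
  calc aeval (x + y) (Polynomial.bernoulli n) = (taylor x p).eval y := by
        rw [taylor_eval, add_comm, eval_map_algebraMap]
    _ = ∑ k ∈ range (n + 1), n.choose k * aeval x (Polynomial.bernoulli (n - k)) * y ^ k := by
        rw [eval_eq_sum_range' (by rwa [natDegree_taylor])]
        simp [taylor_coeff, hasse_map, hasseDeriv_bernoulli, eval_map_algebraMap]
    _ = ∑ k ∈ range (n + 1), n.choose k * aeval x (Polynomial.bernoulli k) * y ^ (n - k) := by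
        rw [← sum_range_reflect]
        refine sum_congr rfl fun k hk ↦ ?_
        have hk : k ≤ n := mem_range_succ_iff.mp hk
        simp [Nat.choose_symm hk, Nat.sub_sub_self hk]

theorem bernoulliFun_add (n : ℕ) (x y : ℝ) :
    bernoulliFun n (x + y) =
      ∑ k ∈ range (n + 1), n.choose k * bernoulliFun k x * y ^ (n - k) := by
  simpa only [bernoulliFun, eval_map_algebraMap] using aeval_bernoulli_add n x y

end BernoulliAddition

/-- The Euler number `𝓔(n)` of arbitrary index, as the value `2 ^ n * E_n(1/2)` of the Euler
polynomial `E_n(x) = 2 ^ (n + 1) / (n + 1) * (B_{n+1}((x + 1) / 2) - B_{n+1}(x / 2))`. -/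
noncomputable def eulerNumber (n : ℕ) : ℝ :=
  4 ^ (n + 1) / (2 * (n + 1)) * (bernoulliFun (n + 1) (3 / 4) - bernoulliFun (n + 1) (1 / 4))

theorem bernoulliFun_three_quarters (n : ℕ) :
    bernoulliFun n (3 / 4) = (-1) ^ n * bernoulliFun n (1 / 4) := by
  rw [← bernoulliFun_eval_one_sub]
  norm_num

theorem eulerNumber_odd (k : ℕ) : eulerNumber (2 * k + 1) = 0 := by
  simp [eulerNumber, bernoulliFun_three_quarters, pow_succ, pow_mul]

theorem eulerNumber_even (j : ℕ) :
    eulerNumber (2 * j) = -(4 ^ (2 * j + 1) / (2 * j + 1) * bernoulliFun (2 * j + 1) (1 / 4)) := by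
  rw [eulerNumber, bernoulliFun_three_quarters, Odd.neg_one_pow ⟨j, rfl⟩]
  push_cast
  field_simp
  ring

theorem choose_mul_eulerNumber (m a : ℕ) :
    m.choose a * eulerNumber a = 4 ^ (a + 1) / (2 * (m + 1)) * ((m + 1).choose (a + 1) *
      (bernoulliFun (a + 1) (3 / 4) - bernoulliFun (a + 1) (1 / 4))) := by
  have hchoose : ((m : ℝ) + 1) * m.choose a = (m + 1).choose (a + 1) * (a + 1) :=
    mod_cast Nat.add_one_mul_choose_eq m a
  rw [eulerNumber]
  field_simp
  linear_combination (bernoulliFun (a + 1) (3 / 4) - bernoulliFun (a + 1) (1 / 4)) * hchoose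

theorem sum_neg_one_pow_mul_choose_mul_eulerNumber (m : ℕ) :
    ∑ a ∈ range (m + 1), (-1) ^ (m - a) * m.choose a * eulerNumber a =
      2 ^ (m + 1) * (1 - 2 ^ (m + 1)) * bernoulli (m + 1) / (m + 1) := by
  have addition : bernoulliFun (m + 1) 2⁻¹ - bernoulliFun (m + 1) 0 =
      ∑ a ∈ range (m + 1), (m + 1).choose (a + 1) *
        (bernoulliFun (a + 1) (3 / 4) - bernoulliFun (a + 1) (1 / 4)) * (-1 / 4) ^ (m - a) := by
    rw [show (2⁻¹ : ℝ) = 3 / 4 + -1 / 4 by norm_num, show (0 : ℝ) = 1 / 4 + -1 / 4 by norm_num,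
      bernoulliFun_add, bernoulliFun_add, ← sum_sub_distrib, sum_range_succ']
    simp [mul_sub, sub_mul]
  calc ∑ a ∈ range (m + 1), (-1) ^ (m - a) * m.choose a * eulerNumber a
      = 4 ^ (m + 1) / (2 * (m + 1)) * (bernoulliFun (m + 1) 2⁻¹ - bernoulliFun (m + 1) 0) := by
        rw [addition, mul_sum]
        refine sum_congr rfl fun a ha ↦ ?_
        obtain ⟨c, rfl⟩ := Nat.exists_eq_add_of_le (mem_range_succ_iff.mp ha)
        have four_pow : (4 : ℝ) ^ (a + c + 1) = 4 ^ (a + 1) * 4 ^ c := by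
          rw [add_right_comm, pow_add]
        rw [mul_assoc, choose_mul_eulerNumber, Nat.add_sub_cancel_left, div_pow, four_pow]
        field_simp
    _ = 2 ^ (m + 1) * (1 - 2 ^ (m + 1)) * bernoulli (m + 1) / (m + 1) := by
        have four_pow : (4 : ℝ) ^ (m + 1) = 2 ^ (m + 1) * 2 ^ (m + 1) := by
          rw [← mul_pow]; norm_num
        rw [bernoulliFun_eval_half, bernoulliFun_eval_zero, four_pow]
        field_simp
        ring

theorem hasSum_neg_one_pow_div_two_mul_add_one_pow {j : ℕ} (hj : j ≠ 0) :
    HasSum (fun k : ℕ ↦ (-1 : ℝ) ^ k / (2 * k + 1) ^ (2 * j + 1))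
      ((-1 : ℝ) ^ (j + 1) * (2 * Real.pi) ^ (2 * j + 1) / 2 / (2 * j + 1)! *
        bernoulliFun (2 * j + 1) (1 / 4)) := by
  have fourier := hasSum_one_div_nat_pow_mul_sin hj (x := 1 / 4) (by norm_num)
  have hinj : Function.Injective fun k : ℕ ↦ 2 * k + 1 := fun k l h ↦ by simpa using h
  rw [← hinj.hasSum_iff] at fourier
  · convert! fourier using 1
    ext k
    have : Real.sin (2 * Real.pi * (2 * k + 1 : ℕ) * (1 / 4)) = (-1) ^ k := by
      rw [← Real.cos_nat_mul_pi k, ← Real.sin_add_pi_div_two]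
      congr 1
      push_cast
      ring
    simp only [Function.comp_apply, this]
    push_cast
    ring
  · intro i hi
    obtain ⟨k, rfl | rfl⟩ := i.even_or_odd'
    · have : Real.sin (2 * Real.pi * (2 * k : ℕ) * (1 / 4)) = 0 := by
        rw [← Real.sin_nat_mul_pi k]
        congr 1
        push_cast
        ring
      rw [this, mul_zero]
    · exact absurd ⟨k, rfl⟩ hi

theorem tendsto_sum_neg_one_pow_div_two_mul_add_one_pow (j : ℕ) :
    Tendsto (fun n ↦ ∑ k ∈ range n, (-1 : ℝ) ^ k / (2 * k + 1) ^ (2 * j + 1)) atTop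
      (nhds ((-1) ^ j * (Real.pi / 2) ^ (2 * j + 1) * eulerNumber (2 * j) / (2 * (2 * j)!))) := by
  obtain rfl | hj := eq_or_ne j 0
  · convert! Real.tendsto_sum_pi_div_four using 2
    · simp
    · norm_num [eulerNumber]
      ring
  · convert! (hasSum_neg_one_pow_div_two_mul_add_one_pow hj).tendsto_sum_nat using 2
    have four_pow : (4 : ℝ) ^ (2 * j + 1) = 2 ^ (2 * j + 1) * 2 ^ (2 * j + 1) := by
      rw [← mul_pow]; norm_num
    rw [eulerNumber_even, Nat.factorial_succ, four_pow, div_pow, mul_pow, pow_succ (-1 : ℝ) j]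
    push_cast
    field_simp

theorem eulerChar_eulerNumber : eulerChar fun j ↦ eulerNumber (2 * j) := by
  intro j
  convert! (tendsto_sum_neg_one_pow_div_two_mul_add_one_pow j).const_mul (2 ^ (2 * j + 1))
    using 2 with n
  · rw [mul_sum]
    refine sum_congr rfl fun k _ ↦ ?_
    rw [show 2 * (k : ℝ) + 1 = 2 * (k + 1 / 2) by ring, mul_pow]
    field_simp
  · rw [div_pow]
    field_simp

theorem eulerChar.unique {E E' : ℕ → ℝ} (hE : eulerChar E) (hE' : eulerChar E') : E = E' := by
  ext j
  have h := tendsto_nhds_unique (hE j) (hE' j)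
  rw [div_left_inj' (by positivity)] at h
  exact mul_left_cancel₀ (by simp [Real.pi_ne_zero]) h

theorem sum_range_two_mul_of_odd_eq_zero {M : Type*} [AddCommMonoid M] {f : ℕ → M}
    (hf : ∀ k, f (2 * k + 1) = 0) (n : ℕ) :
    ∑ i ∈ range (2 * n), f i = ∑ j ∈ range n, f (2 * j) := by
  induction n with
  | zero => simp
  | succ n ih => rw [mul_add_one, sum_range_succ, sum_range_succ, sum_range_succ, ih, hf, add_zero]

theorem pow_add_mul_zpow_neg_sub_zpow {K : Type*} [Field K] {x : K} (hx : x ≠ 0) (k m : ℕ) :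
    x ^ (k + m) * (x ^ (-(k : ℤ)) - x ^ (((k + m : ℕ) : ℤ) - 2 * k)) = x ^ m * (1 - x ^ m) := by
  rw [zpow_sub₀ hx, two_mul (k : ℤ), zpow_add₀ hx, zpow_neg, zpow_natCast, zpow_natCast, pow_add]
  field_simp

theorem sum_Gamma_mul_eulerNumber_div_factorial (N : ℕ) {s : ℂ} (hs : ∀ k : ℕ, s ≠ -k) :
    ∑ a ∈ range N, Complex.Gamma (s + a) * eulerNumber a / a ! =
      2 ^ N * Complex.Gamma (s + N) * ∑ k ∈ range N,
        ((2 : ℂ) ^ (-(k : ℤ)) - 2 ^ ((N : ℤ) - 2 * k)) * bernoulli (N - k) /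
          (k ! * (N - k)! * (N - 1 + s - k)) := by
  have transform (m : ℕ) :
      ∑ a ∈ range (m + 1), (-1 : ℂ) ^ (m - a) * m.choose a * (eulerNumber a : ℂ) =
        2 ^ (m + 1) * (1 - 2 ^ (m + 1)) * bernoulli (m + 1) / (m + 1) := by
    exact_mod_cast congrArg Complex.ofReal (sum_neg_one_pow_mul_choose_mul_eulerNumber m)
  rw [sum_Gamma_mul_div_factorial N hs, mul_comm (2 ^ N : ℂ), mul_assoc, ← sum_range_reflect]
  congr 1
  rw [mul_sum]
  refine sum_congr rfl fun k hk ↦ ?_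
  obtain ⟨m, rfl⟩ := Nat.exists_eq_add_of_lt (mem_range.mp hk)
  have reflect_k : k + m + 1 - 1 - k = m := by omega
  have reflect_m : k + m + 1 - 1 - m = k := by omega
  have succ_m : k + m + 1 - k = m + 1 := by omega
  have pole : ((k + m + 1 : ℕ) : ℂ) - 1 + s - k = s + m := by push_cast; ring
  have powers := pow_add_mul_zpow_neg_sub_zpow (two_ne_zero (α := ℂ)) k (m + 1)
  rw [reflect_k, reflect_m, succ_m, pole, transform, ← mul_div_assoc, ← mul_assoc, add_assoc k,
    powers, Nat.factorial_succ]
  push_cast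
  field_simp

/-- For every `n ≥ 1` and complex `s` which is not a nonpositive integer:
`∑_{j=0}^{n-1} Γ(2j+s) 𝓔(2j)/Γ(2j+1) = 2^{2n} Γ(s+2n) ∑_{k=0}^{2n-1}
  (2^{-k} - 2^{2n-2k}) B_{2n-k} / (Γ(k+1) Γ(2n-k+1) (2n-1+s-k))`. -/
theorem stmt_3 (n : ℕ) (hn : 1 ≤ n) (s : ℂ) (hs : ∀ k : ℕ, s ≠ -(k : ℂ))
    (E : ℕ → ℝ) (hE : eulerChar E) :
    ∑ j ∈ Finset.range n,
        Complex.Gamma (2 * (j : ℂ) + s) * (E j : ℂ) / Complex.Gamma (2 * (j : ℂ) + 1)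
      = 2 ^ (2*n) * Complex.Gamma (s + 2 * (n : ℂ)) *
          ∑ k ∈ Finset.range (2*n),
            ((2 : ℂ) ^ (-(k : ℤ)) - (2 : ℂ) ^ (2 * (n : ℤ) - 2 * (k : ℤ))) *
              ((bernoulli (2*n - k) : ℚ) : ℂ) /
              (Complex.Gamma ((k : ℂ) + 1) * Complex.Gamma (((2*n - k : ℕ) : ℂ) + 1) *
                (2 * (n : ℂ) - 1 + s - (k : ℂ))) := by
  have Gamma_even (j : ℕ) : Complex.Gamma (2 * j + 1) = (2 * j)! := by
    exact_mod_cast Complex.Gamma_nat_eq_factorial (2 * j)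
  have odd_term (k : ℕ) :
      Complex.Gamma (s + (2 * k + 1 : ℕ)) * eulerNumber (2 * k + 1) / (2 * k + 1)! = 0 := by
    simp [eulerNumber_odd]
  have key := sum_Gamma_mul_eulerNumber_div_factorial (2 * n) hs
  rw [sum_range_two_mul_of_odd_eq_zero odd_term] at key
  simpa [Gamma_even, hE.unique eulerChar_eulerNumber, Complex.Gamma_nat_eq_factorial, add_comm s]
    using key
end

section
/- For all integers m ≥ 1 and 0 ≤ p ≤ 2m, the series ∑_{k=0}^∞ [(−1)^p E_{−p}(iπ(k+1/2)) + E_{−p}(−iπ(k+1/2))]/(k+1/2)^{2m−p} converges and (π^{p−2m} (−1)^m e^{−iπp/2}/Γ(p+1)) · ∑_{k=0}^∞ [(−1)^p E_{−p}(iπ(k+1/2)) + E_{−p}(−iπ(k+1/2))]/(k+1/2)^{2m−p} = −∑_{j=⌊m−p/2+1/2⌋}^{m} 𝓔(2j)/(Γ(2m−2j+1) Γ(2j+1)). -/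
open Filter

/-- The generalized exponential integral of nonpositive integer order `-p`:
`E_{-p}(z) = Γ(p+1) e^{-z} z^{-p-1} ∑_{j=0}^{p} z^j/Γ(j+1)`. -/
noncomputable def expIntNeg (p : ℕ) (z : ℂ) : ℂ :=
  (Nat.factorial p : ℂ) * Complex.exp (-z) * z ^ (-(p : ℤ) - 1) *
    ∑ j ∈ Finset.range (p + 1), z ^ j / (Nat.factorial j : ℂ)

/-!
Put `z_k = iπ(k + 1/2)`, so that `exp (-z_k) = -exp z_k`. This turns the pair
`(-1)^p E_{-p}(z) + E_{-p}(-z)` at `z = z_k` into a sum of two truncated exponential series, at `z`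
and at `-z`, in which only the even powers of `z` survive. The constant in front of the series is
`(-1)^p (iπ)^{p-2m} / p!`, and together with `(k + 1/2)^{p-2m}` it makes up
`(-1)^p z_k^{p-2m} / p!`. Hence the normalized summand is a finite combination of the terms
`exp z_k / z_k^{2j+1}`, and by the characterization of the Euler numbers these sum over `k` to
`𝓔(2j) / (2 (2j)!)`.
-/

open Complex Finset Nat
open scoped Topology

/-- The node `iπ(k + 1/2)`, the `k`-th zero of `cosh` on the positive imaginary axis. The series of
the theorem and the series of Euler numbers are both sums over these nodes. -/
noncomputable def coshZero (k : ℕ) : ℂ :=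
  I * (Real.pi : ℂ) * ((k : ℂ) + 1 / 2)

lemma natCast_add_half_ne_zero {K : Type*} [Field K] [CharZero K] (k : ℕ) :
    (k : K) + 1 / 2 ≠ 0 := by
  have h : (k : K) + 1 / 2 = ((2 * k : ℕ) + 1) / 2 := by
    push_cast
    field_simp
  rw [h]
  exact div_ne_zero (cast_add_one_ne_zero _) two_ne_zero

lemma I_mul_pi_ne_zero : I * (Real.pi : ℂ) ≠ 0 :=
  mul_ne_zero I_ne_zero (ofReal_ne_zero.mpr Real.pi_ne_zero)

lemma coshZero_ne_zero (k : ℕ) : coshZero k ≠ 0 :=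
  mul_ne_zero I_mul_pi_ne_zero (natCast_add_half_ne_zero k)

lemma exp_coshZero (k : ℕ) : exp (coshZero k) = (-1) ^ k * I := by
  have h : coshZero k = k * (Real.pi * I) + Real.pi / 2 * I := by
    rw [coshZero]; ring
  rw [h, exp_add, exp_nat_mul, exp_pi_mul_I, exp_pi_div_two_mul_I]

lemma exp_neg_coshZero (k : ℕ) : exp (-coshZero k) = -exp (coshZero k) := by
  rw [exp_neg, exp_coshZero, mul_inv, inv_I, ← inv_pow, inv_neg_one, mul_neg]

lemma exp_coshZero_div_pow (j k : ℕ) :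
    exp (coshZero k) / coshZero k ^ (2 * j + 1) =
      (-1) ^ j / (Real.pi : ℂ) ^ (2 * j + 1) * ((-1) ^ k / ((k : ℂ) + 1 / 2) ^ (2 * j + 1)) := by
  have hI : I ^ (2 * j + 1) = (-1) ^ j * I := by rw [pow_succ, pow_mul, I_sq]
  have hsign : ((-1 : ℂ) ^ j)⁻¹ = (-1) ^ j := by rw [← inv_pow, inv_neg_one]
  calc exp (coshZero k) / coshZero k ^ (2 * j + 1)
      = ((-1) ^ k * I) /
          ((-1) ^ j * I * (Real.pi : ℂ) ^ (2 * j + 1) * ((k : ℂ) + 1 / 2) ^ (2 * j + 1)) := by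
        rw [exp_coshZero, coshZero, mul_pow, mul_pow, hI]
    _ = ((-1) ^ j)⁻¹ / (Real.pi : ℂ) ^ (2 * j + 1) *
          ((-1) ^ k / ((k : ℂ) + 1 / 2) ^ (2 * j + 1)) * (I / I) := by
        generalize (k : ℂ) + 1 / 2 = x
        ring
    _ = _ := by rw [hsign, div_self I_ne_zero, mul_one]

lemma eulerChar.tendsto_sum_exp_coshZero_div_pow {E : ℕ → ℝ} (hE : eulerChar E) (j : ℕ) :
    Tendsto (fun N => ∑ k ∈ range N, exp (coshZero k) / coshZero k ^ (2 * j + 1)) atTop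
      (𝓝 ((E j : ℂ) / (2 * (2 * j)!))) := by
  have hcast := (continuous_ofReal.tendsto _).comp (hE j)
  have hscaled := hcast.const_mul ((-1 : ℂ) ^ j / (Real.pi : ℂ) ^ (2 * j + 1))
  have hsign : (-1 : ℂ) ^ j * (-1) ^ j = 1 := by rw [← mul_pow]; simp
  have hpi : (Real.pi : ℂ) ^ (2 * j + 1) ≠ 0 :=
    pow_ne_zero _ (ofReal_ne_zero.mpr Real.pi_ne_zero)
  convert hscaled using 2 with N
  · simp only [exp_coshZero_div_pow, ← mul_sum, Function.comp_apply]
    push_cast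
    rfl
  · push_cast
    calc (E j : ℂ) / (2 * (2 * j)!)
        = (-1) ^ j * (-1) ^ j * (E j / (2 * (2 * j)!)) := by rw [hsign, one_mul]
      _ = _ := by field_simp

lemma sum_range_one_add_neg_one_pow_mul {R : Type*} [CommRing R] (f : ℕ → R) (p : ℕ) :
    ∑ j ∈ range (p + 1), (1 + (-1) ^ j) * f j = 2 * ∑ l ∈ range (p / 2 + 1), f (2 * l) := by
  induction p with
  | zero => simp [one_add_one_eq_two]
  | succ p ih =>
    rw [sum_range_succ, ih]
    obtain ⟨q, rfl | rfl⟩ := p.even_or_odd'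
    · have hodd : (-1 : R) ^ (2 * q + 1) = -1 := Odd.neg_one_pow ⟨q, rfl⟩
      rw [hodd, show (2 * q + 1) / 2 = 2 * q / 2 by lia]
      ring
    · have heven : (-1 : R) ^ (2 * q + 1 + 1) = 1 := Even.neg_one_pow ⟨q + 1, by lia⟩
      rw [heven, show (2 * q + 1 + 1) / 2 = (2 * q + 1) / 2 + 1 by lia, sum_range_succ _ (_ + 1),
        show 2 * ((2 * q + 1) / 2 + 1) = 2 * q + 1 + 1 by lia]
      ring

lemma sum_range_pow_div_factorial_add_neg {K : Type*} [Field K] (p : ℕ) (z : K) :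
    ∑ j ∈ range (p + 1), z ^ j / (j ! : K) + ∑ j ∈ range (p + 1), (-z) ^ j / (j ! : K) =
      2 * ∑ l ∈ range (p / 2 + 1), z ^ (2 * l) / ((2 * l)! : K) := by
  rw [← sum_range_one_add_neg_one_pow_mul (fun j => z ^ j / (j ! : K)), ← sum_add_distrib]
  refine sum_congr rfl fun j _ => ?_
  rw [neg_pow z j]
  ring

lemma expIntNeg_add_expIntNeg_neg (p : ℕ) {z : ℂ} (hz : exp (-z) = -exp z) :
    (-1) ^ p * expIntNeg p z + expIntNeg p (-z) =
      -(-1) ^ p * p ! * exp z * z ^ (-(p : ℤ) - 1) *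
        (2 * ∑ l ∈ range (p / 2 + 1), z ^ (2 * l) / ((2 * l)! : ℂ)) := by
  have hneg : (-z) ^ (-(p : ℤ) - 1) = -(-1) ^ p * z ^ (-(p : ℤ) - 1) := by
    rw [neg_eq_neg_one_mul z, mul_zpow, zpow_sub_one₀ (by simp), zpow_neg, ← inv_zpow, inv_neg_one,
      zpow_natCast]
    ring
  rw [← sum_range_pow_div_factorial_add_neg, expIntNeg, expIntNeg, neg_neg, hneg, hz]
  ring

lemma sum_range_half_eq_sum_Icc {M : Type*} [AddCommMonoid M] (f : ℕ → M) {m p : ℕ}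
    (hp : p ≤ 2 * m) :
    ∑ l ∈ range (p / 2 + 1), f (m - l) = ∑ j ∈ Icc ((2 * m - p + 1) / 2) m, f j := by
  rw [range_eq_Ico, sum_Ico_reflect f 0 (by lia : p / 2 + 1 ≤ m + 1)]
  congr 1
  ext j
  simp only [mem_Ico, mem_Icc]
  lia

/-- The factor `(-1)^p z^{p-2m} / p!`. At `z = iπ` it is the constant in front of the series of the
theorem, and at `z = coshZero k` it absorbs that constant and the denominator `(k + 1/2)^{2m-p}`. -/
noncomputable def expIntNegWeight (m p : ℕ) (z : ℂ) : ℂ :=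
  (-1) ^ p / (p ! : ℂ) * z ^ ((p : ℤ) - 2 * m)

lemma expIntNegWeight_ne_zero (m p : ℕ) {z : ℂ} (hz : z ≠ 0) : expIntNegWeight m p z ≠ 0 :=
  mul_ne_zero (div_ne_zero (by simp) (cast_ne_zero.mpr p.factorial_ne_zero)) (zpow_ne_zero _ hz)

lemma expIntNegWeight_mul_expIntNeg_add_neg {m p : ℕ} (hp : p ≤ 2 * m) {z : ℂ} (hz0 : z ≠ 0)
    (hz : exp (-z) = -exp z) :
    expIntNegWeight m p z * ((-1) ^ p * expIntNeg p z + expIntNeg p (-z)) =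
      -∑ j ∈ Icc ((2 * m - p + 1) / 2) m,
        2 / ((2 * m - 2 * j)! : ℂ) * (exp z / z ^ (2 * j + 1)) := by
  have hsign : (-1 : ℂ) ^ p * (-1) ^ p = 1 := by rw [← mul_pow]; simp
  have hfact : (p ! : ℂ) ≠ 0 := cast_ne_zero.mpr p.factorial_ne_zero
  have hpow : z ^ ((p : ℤ) - 2 * m) * z ^ (-(p : ℤ) - 1) = (z ^ (2 * m + 1))⁻¹ := by
    rw [← zpow_add₀ hz0, ← zpow_natCast, ← zpow_neg]
    congr 1
    push_cast
    ring
  have hterm (l : ℕ) (hl : l ∈ range (p / 2 + 1)) :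
      (z ^ (2 * m + 1))⁻¹ * z ^ (2 * l) = (z ^ (2 * (m - l) + 1))⁻¹ := by
    rw [mem_range] at hl
    rw [show 2 * m + 1 = 2 * (m - l) + 1 + 2 * l by lia, pow_add, mul_inv,
      inv_mul_cancel_right₀ (pow_ne_zero _ hz0)]
  rw [expIntNeg_add_expIntNeg_neg p hz, expIntNegWeight, ← sum_range_half_eq_sum_Icc _ hp]
  calc _ = -((-1 : ℂ) ^ p * (-1) ^ p * (p ! / p !) *
          (z ^ ((p : ℤ) - 2 * m) * z ^ (-(p : ℤ) - 1)) * exp z * 2 *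
          ∑ l ∈ range (p / 2 + 1), z ^ (2 * l) / ((2 * l)! : ℂ)) := by
        ring
    _ = -∑ l ∈ range (p / 2 + 1), 2 * exp z * ((z ^ (2 * m + 1))⁻¹ * z ^ (2 * l)) / (2 * l)! := by
        rw [hsign, div_self hfact, hpow, mul_sum]
        congr 1
        refine sum_congr rfl fun l _ => ?_
        ring
    _ = _ := by
        congr 1
        refine sum_congr rfl fun l hl => ?_
        rw [hterm l hl]
        rw [mem_range] at hl
        rw [show 2 * m - 2 * (m - l) = 2 * l by lia]
        ring

lemma expIntNegWeight_I_mul_pi (m p : ℕ) :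
    expIntNegWeight m p (I * (Real.pi : ℂ)) =
      (Real.pi : ℂ) ^ ((p : ℤ) - 2 * (m : ℤ)) * (-1) ^ m *
        exp (-(I * (Real.pi : ℂ) * (p : ℂ) / 2)) / Gamma ((p : ℂ) + 1) := by
  have hexp : exp (-(I * (Real.pi : ℂ) * (p : ℂ) / 2)) = (-1) ^ p * I ^ p := by
    rw [show -(I * (Real.pi : ℂ) * (p : ℂ) / 2) = p * (-(Real.pi : ℂ) / 2 * I) by ring,
      exp_nat_mul, exp_neg_pi_div_two_mul_I, neg_pow]
  have hI : I ^ ((p : ℤ) - 2 * m) = I ^ p * (-1) ^ m := by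
    rw [zpow_sub₀ I_ne_zero, zpow_mul, zpow_natCast, zpow_natCast, zpow_ofNat, I_sq, div_eq_mul_inv,
      ← inv_pow, inv_neg_one]
  rw [expIntNegWeight, hexp, Gamma_nat_eq_factorial, mul_zpow, hI]
  ring

lemma expIntNegWeight_coshZero {m p : ℕ} (hp : p ≤ 2 * m) (k : ℕ) :
    expIntNegWeight m p (coshZero k) =
      expIntNegWeight m p (I * (Real.pi : ℂ)) / ((k : ℂ) + 1 / 2) ^ (2 * m - p) := by
  have hpow : ((k : ℂ) + 1 / 2) ^ ((p : ℤ) - 2 * m) = (((k : ℂ) + 1 / 2) ^ (2 * m - p))⁻¹ := by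
    rw [← zpow_natCast, ← zpow_neg]
    congr 1
    lia
  rw [expIntNegWeight, expIntNegWeight, coshZero, mul_zpow (I * (Real.pi : ℂ)), hpow, ← mul_assoc,
    ← div_eq_mul_inv]

lemma eulerChar.tendsto_sum_expIntNegWeight_mul {E : ℕ → ℝ} (hE : eulerChar E) {m p : ℕ}
    (hp : p ≤ 2 * m) :
    Tendsto (fun N => ∑ k ∈ range N, expIntNegWeight m p (coshZero k) *
        ((-1) ^ p * expIntNeg p (coshZero k) + expIntNeg p (-coshZero k))) atTop
      (𝓝 (-∑ j ∈ Icc ((2 * m - p + 1) / 2) m,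
        (E j : ℂ) / ((2 * m - 2 * j)! * (2 * j)!))) := by
  have hlim := (tendsto_finsetSum (Icc ((2 * m - p + 1) / 2) m) fun j _ =>
    (hE.tendsto_sum_exp_coshZero_div_pow j).const_mul (2 / ((2 * m - 2 * j)! : ℂ))).neg
  convert hlim using 2 with N
  · simp only [mul_sum]
    rw [sum_comm, ← sum_neg_distrib]
    exact sum_congr rfl fun k _ =>
      expIntNegWeight_mul_expIntNeg_add_neg hp (coshZero_ne_zero k) (exp_neg_coshZero k)
  · congr 1
    refine sum_congr rfl fun j _ => ?_
    field_simp

/-- For integers `m ≥ 1`, `0 ≤ p ≤ 2m`, the series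
`∑_{k=0}^∞ [(-1)^p E_{-p}(iπ(k+1/2)) + E_{-p}(-iπ(k+1/2))]/(k+1/2)^{2m-p}` converges and
`(π^{p-2m} (-1)^m e^{-iπp/2}/Γ(p+1)) · (that sum)
  = -∑_{j=⌊m-p/2+1/2⌋}^{m} 𝓔(2j)/(Γ(2m-2j+1) Γ(2j+1))`. -/
theorem stmt_5 (m p : ℕ) (hm : 1 ≤ m) (hp : p ≤ 2*m) (E : ℕ → ℝ) (hE : eulerChar E) :
    ∃ L : ℂ,
      Tendsto (fun N => ∑ k ∈ Finset.range N,
          ((-1) ^ p * expIntNeg p (Complex.I * (Real.pi : ℂ) * ((k : ℂ) + 1/2)) +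
            expIntNeg p (-(Complex.I * (Real.pi : ℂ) * ((k : ℂ) + 1/2))))
            / ((k : ℂ) + 1/2) ^ (2*m - p))
        atTop (nhds L) ∧
      (Real.pi : ℂ) ^ ((p : ℤ) - 2 * (m : ℤ)) * (-1) ^ m *
          Complex.exp (-(Complex.I * (Real.pi : ℂ) * (p : ℂ) / 2)) /
          Complex.Gamma ((p : ℂ) + 1) * L
        = -∑ j ∈ Finset.Icc ((2*m - p + 1) / 2) m,
            (E j : ℂ) / (Complex.Gamma (((2*m - 2*j : ℕ) : ℂ) + 1) *
              Complex.Gamma (2 * (j : ℂ) + 1)) := by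
  have hweight := expIntNegWeight_ne_zero m p I_mul_pi_ne_zero
  have hGamma (j : ℕ) : Gamma (2 * (j : ℂ) + 1) = (2 * j)! := by
    exact_mod_cast Gamma_nat_eq_factorial (2 * j)
  rw [← expIntNegWeight_I_mul_pi]
  simp only [Gamma_nat_eq_factorial, hGamma]
  refine ⟨_, ?_, mul_div_cancel₀ _ hweight⟩
  refine ((hE.tendsto_sum_expIntNegWeight_mul hp).div_const _).congr fun N => ?_
  rw [div_eq_iff hweight, sum_mul]
  refine sum_congr rfl fun k _ => ?_
  rw [expIntNegWeight_coshZero hp, div_mul_comm, coshZero]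
end

section
/- For every integer m ≥ 1, ∑_{j=0}^{m−1} 𝓔(2j) H_{2m−2j}/(Γ(2m−2j+1) Γ(2j+1)) = ∑_{k=1}^{m} 2^{2k}(2^{2k} − 1) B_{2k}/((2m−2k+1) Γ(2m−2k+2) Γ(2k+1)) − 1/(2m Γ(2m+1)). -/
open Filter

/-!
Let `G = ∑ Hₙ Xⁿ / n!` and `Ein = ∑_{n ≥ 1} (-1)ⁿ⁺¹ Xⁿ / (n · n!)`. Both `G` and `exp · Ein` solve
`X (dF/dX - F) = exp - 1`, `F(0) = 0`, so `G = exp · Ein`. Taking even parts and dividing by `cosh`,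
`sech · G_even = Ein_even + tanh · Ein_odd`, and the theorem compares coefficients of `X ^ (2 * m)`.

The coefficients of `sech` and `tanh` come from Bernoulli generating functions: `sech` is the even
part of `X⁻¹ (1 - 4 X e^X / (e^{4X} - 1))`, which involves the values `Bₙ(1/4)`, and `tanh` is the
odd part of `-2 / (e^{2X} + 1)`. The Fourier series of `B_{2j+1}` at `1/4` is the series that
characterizes `𝓔(2j)`.
-/

open Finset PowerSeries
open scoped Nat

section Parity

variable {R : Type*} [Semiring R]

/-- The even part of a power series: its terms of even degree. -/
noncomputable def evenPart : R⟦X⟧ →ₗ[R] R⟦X⟧ where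
  toFun f := mk fun n => if Even n then coeff n f else 0
  map_add' f g := by ext n; by_cases hn : Even n <;> simp [hn]
  map_smul' a f := by ext n; by_cases hn : Even n <;> simp [hn]

/-- The odd part of a power series: its terms of odd degree. -/
noncomputable def oddPart : R⟦X⟧ →ₗ[R] R⟦X⟧ where
  toFun f := mk fun n => if Even n then 0 else coeff n f
  map_add' f g := by ext n; by_cases hn : Even n <;> simp [hn]
  map_smul' a f := by ext n; by_cases hn : Even n <;> simp [hn]

theorem coeff_evenPart (n : ℕ) (f : R⟦X⟧) :
    coeff n (evenPart f) = if Even n then coeff n f else 0 := by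
  simp [evenPart]

theorem coeff_oddPart (n : ℕ) (f : R⟦X⟧) :
    coeff n (oddPart f) = if Even n then 0 else coeff n f := by
  simp [oddPart]

theorem evenPart_add_oddPart (f : R⟦X⟧) : evenPart f + oddPart f = f := by
  ext n
  by_cases hn : Even n <;> simp [coeff_evenPart, coeff_oddPart, hn]

@[simp]
theorem evenPart_evenPart (f : R⟦X⟧) : evenPart (evenPart f) = evenPart f := by
  ext n
  by_cases hn : Even n <;> simp [coeff_evenPart, hn]

@[simp]
theorem evenPart_oddPart (f : R⟦X⟧) : evenPart (oddPart f) = 0 := by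
  ext n
  by_cases hn : Even n <;> simp [coeff_evenPart, coeff_oddPart, hn]

@[simp]
theorem oddPart_evenPart (f : R⟦X⟧) : oddPart (evenPart f) = 0 := by
  ext n
  by_cases hn : Even n <;> simp [coeff_evenPart, coeff_oddPart, hn]

@[simp]
theorem oddPart_oddPart (f : R⟦X⟧) : oddPart (oddPart f) = oddPart f := by
  ext n
  by_cases hn : Even n <;> simp [coeff_oddPart, hn]

@[simp]
theorem evenPart_X : evenPart (X : R⟦X⟧) = 0 := by
  ext n
  rcases eq_or_ne n 1 with rfl | hn <;> simp [coeff_evenPart, coeff_X, *]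

@[simp]
theorem oddPart_X : oddPart (X : R⟦X⟧) = X := by
  ext n
  rcases eq_or_ne n 1 with rfl | hn <;> simp [coeff_oddPart, coeff_X, *]

theorem evenPart_mul (f g : R⟦X⟧) :
    evenPart (f * g) = evenPart f * evenPart g + oddPart f * oddPart g := by
  ext n
  simp only [coeff_evenPart, coeff_oddPart, map_add, coeff_mul, ← sum_add_distrib]
  rw [← sum_const_zero, ← sum_ite_irrel]
  refine sum_congr rfl fun p hp => ?_
  rw [← mem_antidiagonal.mp hp]
  by_cases h₁ : Even p.1 <;> by_cases h₂ : Even p.2 <;> simp [Nat.even_add, h₁, h₂]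

theorem oddPart_mul (f g : R⟦X⟧) :
    oddPart (f * g) = evenPart f * oddPart g + oddPart f * evenPart g := by
  ext n
  simp only [coeff_evenPart, coeff_oddPart, map_add, coeff_mul, ← sum_add_distrib]
  rw [← sum_const_zero, ← sum_ite_irrel]
  refine sum_congr rfl fun p hp => ?_
  rw [← mem_antidiagonal.mp hp]
  by_cases h₁ : Even p.1 <;> by_cases h₂ : Even p.2 <;> simp [Nat.even_add, h₁, h₂]

theorem coeff_two_mul_evenPart_mul_evenPart (m : ℕ) (f g : R⟦X⟧) :
    coeff (2 * m) (evenPart f * evenPart g) =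
      ∑ j ∈ range (m + 1), coeff (2 * j) f * coeff (2 * m - 2 * j) g := by
  rw [coeff_mul]
  symm
  refine sum_of_injOn (fun j => (2 * j, 2 * m - 2 * j)) (fun i _ j _ h => by simp_all)
    (fun j hj => ?_) (fun p hp hpj => ?_) fun j _ => ?_
  · simp only [coe_range, Set.mem_Iio, mem_coe, HasAntidiagonal.mem_antidiagonal] at hj ⊢
    lia
  · have hp₁ : ¬ Even p.1 := by
      rintro ⟨j, hj⟩
      rw [HasAntidiagonal.mem_antidiagonal] at hp
      exact hpj ⟨j, by grind, by grind⟩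
    simp [coeff_evenPart, hp₁]
  · simp [coeff_evenPart, ← Nat.mul_sub]

theorem coeff_two_mul_oddPart_mul_oddPart (m : ℕ) (f g : R⟦X⟧) :
    coeff (2 * m) (oddPart f * oddPart g) =
      ∑ k ∈ Icc 1 m, coeff (2 * k - 1) f * coeff (2 * m - 2 * k + 1) g := by
  rw [coeff_mul]
  symm
  refine sum_of_injOn (fun k => (2 * k - 1, 2 * m - 2 * k + 1)) (fun i hi j hj h => ?_)
    (fun k hk => ?_) (fun p hp hpk => ?_) fun k hk => ?_
  · simp only [coe_Icc, Set.mem_Icc, Prod.mk.injEq] at hi hj h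
    lia
  · simp only [coe_Icc, Set.mem_Icc, mem_coe, HasAntidiagonal.mem_antidiagonal] at hk ⊢
    lia
  · have hp₁ : Even p.1 := by
      by_contra hodd
      obtain ⟨k, hk⟩ := Nat.not_even_iff_odd.mp hodd
      rw [HasAntidiagonal.mem_antidiagonal] at hp
      exact hpk ⟨k + 1, by grind, by grind⟩
    simp [coeff_oddPart, hp₁]
  · have hk₁ : ¬ Even (2 * k - 1) := by
      rw [mem_Icc] at hk
      grind
    simp [coeff_oddPart, hk₁, ← Nat.mul_sub]

theorem evenPart_sub_oddPart {R : Type*} [CommRing R] (f : R⟦X⟧) :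
    evenPart f - oddPart f = evalNegHom f := by
  ext n
  rcases Nat.even_or_odd n with hn | hn
  · simp [evalNegHom, coeff_evenPart, coeff_oddPart, hn, hn.neg_one_pow]
  · simp [evalNegHom, coeff_evenPart, coeff_oddPart, Nat.not_even_iff_odd.mpr hn, hn.neg_one_pow]

end Parity

theorem constantCoeff_rescale {R : Type*} [CommSemiring R] (a : R) (f : R⟦X⟧) :
    constantCoeff (rescale a f) = constantCoeff f := by
  rw [← coeff_zero_eq_constantCoeff_apply, coeff_rescale, pow_zero, one_mul,
    coeff_zero_eq_constantCoeff_apply]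

section Hyperbolic

variable (A : Type*) [CommRing A] [Algebra ℚ A]

/-- The power series of `cosh`. -/
noncomputable def coshSeries : A⟦X⟧ := evenPart (exp A)

/-- The power series of `sinh`. -/
noncomputable def sinhSeries : A⟦X⟧ := oddPart (exp A)

@[simp]
theorem evenPart_coshSeries : evenPart (coshSeries A) = coshSeries A := evenPart_evenPart _

@[simp]
theorem oddPart_coshSeries : oddPart (coshSeries A) = 0 := oddPart_evenPart _

@[simp]
theorem evenPart_sinhSeries : evenPart (sinhSeries A) = 0 := evenPart_oddPart _

@[simp]
theorem oddPart_sinhSeries : oddPart (sinhSeries A) = sinhSeries A := oddPart_oddPart _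

theorem constantCoeff_coshSeries : constantCoeff (coshSeries A) = 1 := by
  simp [coshSeries, ← coeff_zero_eq_constantCoeff_apply, coeff_evenPart]

theorem sinhSeries_ne_zero [Nontrivial A] : sinhSeries A ≠ 0 := fun h => by
  simpa [sinhSeries, coeff_oddPart] using congrArg (coeff 1) h

theorem coshSeries_add_sinhSeries : coshSeries A + sinhSeries A = exp A :=
  evenPart_add_oddPart _

theorem evalNegHom_exp : evalNegHom (exp A) = coshSeries A - sinhSeries A :=
  (evenPart_sub_oddPart _).symm

theorem coshSeries_sq_sub_sinhSeries_sq : coshSeries A ^ 2 - sinhSeries A ^ 2 = 1 := by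
  have h := exp_mul_exp_neg_eq_one (A := A)
  rw [evalNegHom_exp, ← coshSeries_add_sinhSeries] at h
  linear_combination h

end Hyperbolic

section Bernoulli

variable (K : Type*) [Field K] [CharZero K]

/-- The power series of `-2 / (e^{2X} + 1) = tanh X - 1`. -/
noncomputable def tanhSubOneSeries : K⟦X⟧ :=
  mk fun n => 2 ^ (n + 1) * (2 ^ (n + 1) - 1) * (bernoulli (n + 1) : K) / (n + 1)!

/-- The power series `X⁻¹ (1 - ∑ Bₙ(1/4) (4X)ⁿ / n!)`, whose even part is `sech X`. -/
noncomputable def bernoulliQuarterSeries : K⟦X⟧ :=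
  mk fun n => -(4 ^ (n + 1) * Polynomial.aeval (1 / 4 : K) (Polynomial.bernoulli (n + 1))) /
    (n + 1)!

theorem X_mul_tanhSubOneSeries :
    X * tanhSubOneSeries K =
      rescale 4 (bernoulliPowerSeries K) - rescale 2 (bernoulliPowerSeries K) := by
  ext n
  cases n with
  | zero => simp [constantCoeff_rescale]
  | succ n =>
    have h4 : (4 : K) ^ (n + 1) = 2 ^ (n + 1) * 2 ^ (n + 1) := by rw [← mul_pow]; norm_num
    simp only [tanhSubOneSeries, bernoulliPowerSeries, coeff_succ_X_mul, coeff_rescale, coeff_mk,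
      map_sub, map_div₀, eq_ratCast, map_natCast, h4]
    ring

theorem rescale_bernoulliPowerSeries_mul (k : ℕ) :
    rescale (k : K) (bernoulliPowerSeries K) * (exp K ^ k - 1) = (k : K⟦X⟧) * X := by
  have h := congrArg (rescale (k : K)) (bernoulliPowerSeries_mul_exp_sub_one K)
  simpa [← exp_pow_eq_rescale_exp] using h

theorem tanhSubOneSeries_mul_exp_sq_add_one :
    tanhSubOneSeries K * (exp K ^ 2 + 1) = -2 := by
  have h2 := rescale_bernoulliPowerSeries_mul K 2
  have h4 := rescale_bernoulliPowerSeries_mul K 4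
  have hne : exp K ^ 2 - 1 ≠ 0 := fun h => by
    simpa [exp_pow_eq_rescale_exp, coeff_rescale, coeff_one] using congrArg (coeff 1) h
  push_cast at h2 h4
  apply mul_left_cancel₀ (mul_ne_zero X_ne_zero hne)
  linear_combination (exp K ^ 4 - 1) * X_mul_tanhSubOneSeries K + h4 - (exp K ^ 2 + 1) * h2

theorem tanhSubOneSeries_mul_coshSeries :
    tanhSubOneSeries K * coshSeries K = sinhSeries K - coshSeries K := by
  have h := tanhSubOneSeries_mul_exp_sq_add_one K
  rw [← coshSeries_add_sinhSeries] at h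
  have := algebraRat.charZero K⟦X⟧
  apply mul_left_cancel₀ (two_ne_zero (α := K⟦X⟧))
  linear_combination (coshSeries K - sinhSeries K) * h - tanhSubOneSeries K *
    (coshSeries K + sinhSeries K) * coshSeries_sq_sub_sinhSeries_sq K

theorem sinhSeries_mul_inv_coshSeries :
    sinhSeries K * (coshSeries K)⁻¹ = oddPart (tanhSubOneSeries K) := by
  have h := congrArg oddPart (tanhSubOneSeries_mul_coshSeries K)
  symm
  rw [PowerSeries.eq_mul_inv_iff_mul_eq (by simp [constantCoeff_coshSeries])]
  simpa [oddPart_mul] using h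

theorem one_sub_X_mul_bernoulliQuarterSeries_mul_exp_pow_four_sub_one :
    (1 - X * bernoulliQuarterSeries K) * (exp K ^ 4 - 1) = 4 * X * exp K := by
  have hB : 1 - X * bernoulliQuarterSeries K = rescale 4
      (mk fun n => Polynomial.aeval (1 / 4 : K) ((1 / n ! : ℚ) • Polynomial.bernoulli n)) := by
    ext n
    cases n with
    | zero => simp
    | succ n =>
      simp only [bernoulliQuarterSeries, coeff_succ_X_mul, coeff_rescale, coeff_one, coeff_mk,
        map_sub, map_smul, one_div, Nat.add_eq_zero_iff, one_ne_zero, and_false, ↓reduceIte,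
        zero_sub, Rat.smul_def, Rat.cast_inv, Rat.cast_natCast]
      ring
  have h := congrArg (rescale (4 : K)) (Polynomial.bernoulli_generating_function (1 / 4 : K))
  rw [hB, exp_pow_eq_rescale_exp]
  simpa [rescale_rescale, show C (4 : K) = 4 from rfl] using h

theorem X_mul_bernoulliQuarterSeries_mul_coshSeries_mul_sinhSeries :
    X * (bernoulliQuarterSeries K * (coshSeries K * sinhSeries K)) =
      coshSeries K * sinhSeries K - X * (coshSeries K - sinhSeries K) := by
  have h := one_sub_X_mul_bernoulliQuarterSeries_mul_exp_pow_four_sub_one K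
  rw [← coshSeries_add_sinhSeries] at h
  have := algebraRat.charZero K⟦X⟧
  apply mul_left_cancel₀ (by norm_num : (4 : K⟦X⟧) ≠ 0)
  linear_combination -(coshSeries K - sinhSeries K) ^ 2 * h +
    ((1 - X * bernoulliQuarterSeries K) * (coshSeries K + sinhSeries K) ^ 2 *
      (coshSeries K ^ 2 - sinhSeries K ^ 2 + 1) - 4 * X * (coshSeries K - sinhSeries K)) *
        coshSeries_sq_sub_sinhSeries_sq K

theorem inv_coshSeries : (coshSeries K)⁻¹ = evenPart (bernoulliQuarterSeries K) := by
  have h_even := congrArg evenPart (X_mul_bernoulliQuarterSeries_mul_coshSeries_mul_sinhSeries K)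
  have h_sinh : evenPart (bernoulliQuarterSeries K) * (coshSeries K * sinhSeries K) =
      sinhSeries K := by
    simpa [evenPart_mul, oddPart_mul] using h_even
  symm
  rw [PowerSeries.eq_inv_iff_mul_eq_one (by simp [constantCoeff_coshSeries])]
  apply mul_left_cancel₀ (sinhSeries_ne_zero K)
  linear_combination h_sinh

end Bernoulli

section Harmonic

variable (K : Type*) [Field K] [CharZero K]

/-- The exponential generating series of the harmonic numbers. -/
noncomputable def harmonicSeries : K⟦X⟧ := mk fun n => (harmonic n : K) / n !

/-- The power series of the entire exponential integral `Ein x = ∫₀ˣ (1 - e⁻ᵗ) / t dt`. Its constant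
coefficient is `0` thanks to `1 / 0 = 0`. -/
noncomputable def einSeries : K⟦X⟧ := mk fun n => (-1) ^ (n + 1) / (n * n !)

theorem X_mul_derivative_harmonicSeries_sub :
    X * (derivative K (harmonicSeries K) - harmonicSeries K) = exp K - 1 := by
  ext n
  cases n with
  | zero => simp
  | succ n =>
    simp only [harmonicSeries, coeff_succ_X_mul, coeff_derivative, coeff_mk, coeff_exp, coeff_one,
      map_sub, harmonic_succ, Nat.factorial_succ, Nat.add_eq_zero_iff, one_ne_zero, and_false,
      ↓reduceIte, sub_zero, eq_ratCast]
    push_cast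
    field_simp
    ring

theorem X_mul_derivative_einSeries :
    X * derivative K (einSeries K) = 1 - evalNegHom (exp K) := by
  ext n
  cases n with
  | zero => simp [evalNegHom, constantCoeff_rescale]
  | succ n =>
    simp only [einSeries, evalNegHom, coeff_succ_X_mul, coeff_derivative, coeff_mk, coeff_rescale,
      coeff_exp, coeff_one, map_sub, pow_succ, Nat.add_eq_zero_iff, one_ne_zero, and_false,
      ↓reduceIte, eq_ratCast]
    push_cast
    field_simp
    ring

theorem harmonicSeries_eq_exp_mul_einSeries : harmonicSeries K = exp K * einSeries K := by
  have hderiv : derivative K (exp K + harmonicSeries K - exp K * einSeries K) =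
      exp K + harmonicSeries K - exp K * einSeries K := by
    apply mul_left_cancel₀ (X_ne_zero (R := K))
    simp only [map_add, map_sub, Derivation.leibniz, derivative_exp, smul_eq_mul]
    linear_combination X_mul_derivative_harmonicSeries_sub K -
      exp K * X_mul_derivative_einSeries K + exp_mul_exp_neg_eq_one (A := K)
  have hexp := exp_unique_of_derivative_eq_self hderiv
    (by simp [harmonicSeries, einSeries, ← coeff_zero_eq_constantCoeff_apply,
      -coeff_zero_eq_constantCoeff, coeff_mul])
  linear_combination hexp

theorem inv_coshSeries_mul_evenPart_harmonicSeries :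
    (coshSeries K)⁻¹ * evenPart (harmonicSeries K) =
      evenPart (einSeries K) + sinhSeries K * (coshSeries K)⁻¹ * oddPart (einSeries K) := by
  have hcosh : (coshSeries K)⁻¹ * coshSeries K = 1 :=
    PowerSeries.inv_mul_cancel _ (by simp [constantCoeff_coshSeries])
  have hG : evenPart (harmonicSeries K) =
      coshSeries K * evenPart (einSeries K) + sinhSeries K * oddPart (einSeries K) := by
    rw [harmonicSeries_eq_exp_mul_einSeries, evenPart_mul, coshSeries, sinhSeries]
  rw [hG]
  linear_combination evenPart (einSeries K) * hcosh

theorem sum_coeff_bernoulliQuarterSeries_mul_harmonicSeries (m : ℕ) :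
    ∑ j ∈ range m,
        coeff (2 * j) (bernoulliQuarterSeries K) * coeff (2 * m - 2 * j) (harmonicSeries K) =
      coeff (2 * m) (einSeries K) + ∑ k ∈ Icc 1 m,
        coeff (2 * k - 1) (tanhSubOneSeries K) * coeff (2 * m - 2 * k + 1) (einSeries K) := by
  have h := congrArg (coeff (2 * m)) (inv_coshSeries_mul_evenPart_harmonicSeries K)
  rw [sinhSeries_mul_inv_coshSeries, inv_coshSeries, map_add, coeff_two_mul_evenPart_mul_evenPart,
    coeff_two_mul_oddPart_mul_oddPart, coeff_evenPart, if_pos (even_two_mul m),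
    sum_range_succ] at h
  simpa [harmonicSeries] using h

end Harmonic

section EulerNumbers

theorem sin_two_pi_mul_odd_mul_quarter (k : ℕ) :
    Real.sin (2 * Real.pi * (2 * k + 1 : ℕ) * (1 / 4)) = (-1) ^ k := by
  rw [show 2 * Real.pi * (2 * k + 1 : ℕ) * (1 / 4) = Real.pi / 2 + k * Real.pi by push_cast; ring,
    Real.sin_add_nat_mul_pi, Real.sin_pi_div_two, mul_one]

theorem sin_two_pi_mul_even_mul_quarter (k : ℕ) :
    Real.sin (2 * Real.pi * (2 * k : ℕ) * (1 / 4)) = 0 := by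
  rw [show 2 * Real.pi * (2 * k : ℕ) * (1 / 4) = k * Real.pi by push_cast; ring,
    Real.sin_nat_mul_pi]

theorem hasSum_alternating_one_div_half_add_pow {j : ℕ} (hj : j ≠ 0) :
    HasSum (fun k : ℕ => (-1 : ℝ) ^ k / ((k : ℝ) + 1 / 2) ^ (2 * j + 1))
      ((-1) ^ (j + 1) * (4 * Real.pi) ^ (2 * j + 1) / (2 * (2 * j + 1)!) *
        Polynomial.aeval (1 / 4 : ℝ) (Polynomial.bernoulli (2 * j + 1))) := by
  have hsin := hasSum_one_div_nat_pow_mul_sin hj (x := 1 / 4) ⟨by norm_num, by norm_num⟩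
  have hinj : Function.Injective fun k : ℕ => 2 * k + 1 := fun a b h => by simpa using h
  rw [← hinj.hasSum_iff, Polynomial.eval_map_algebraMap] at hsin
  · convert! hsin.mul_left (2 ^ (2 * j + 1)) using 1
    · ext k
      simp only [Function.comp_apply, sin_two_pi_mul_odd_mul_quarter]
      rw [show ((k : ℝ) + 1 / 2) = (2 * k + 1 : ℕ) / 2 by push_cast; ring, div_pow]
      field_simp
    · rw [show 4 * Real.pi = 2 * (2 * Real.pi) by ring, mul_pow 2 (2 * Real.pi)]
      field_simp
  · intro n hn
    obtain ⟨k, rfl⟩ : Even n := by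
      by_contra hodd
      obtain ⟨k, rfl⟩ := Nat.not_even_iff_odd.mp hodd
      exact hn ⟨k, rfl⟩
    rw [← two_mul, sin_two_pi_mul_even_mul_quarter, mul_zero]

-- Not a `HasSum`: for `j = 0` the series converges only conditionally.
theorem tendsto_sum_alternating_one_div_half_add_pow (j : ℕ) :
    Tendsto (fun n => ∑ k ∈ range n, (-1 : ℝ) ^ k / ((k : ℝ) + 1 / 2) ^ (2 * j + 1)) atTop
      (nhds ((-1) ^ (j + 1) * (4 * Real.pi) ^ (2 * j + 1) / (2 * (2 * j + 1)!) *
        Polynomial.aeval (1 / 4 : ℝ) (Polynomial.bernoulli (2 * j + 1)))) := by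
  rcases eq_or_ne j 0 with rfl | hj
  · convert! Real.tendsto_sum_pi_div_four.const_mul 2 using 1
    · ext n
      rw [mul_sum]
      refine sum_congr rfl fun k _ => ?_
      rw [show (k : ℝ) + 1 / 2 = (2 * k + 1) / 2 by ring]
      simp only [mul_zero, zero_add, pow_one]
      field_simp
    · simp only [mul_zero, zero_add, pow_one, Nat.factorial_one, Nat.cast_one,
        Polynomial.bernoulli_one, Polynomial.aeval_sub, Polynomial.aeval_X, Polynomial.aeval_C,
        map_inv₀, eq_ratCast, Rat.cast_ofNat]
      ring_nf
  · exact (hasSum_alternating_one_div_half_add_pow hj).tendsto_sum_nat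

theorem eulerChar.div_factorial_eq_coeff {E : ℕ → ℝ} (hE : eulerChar E) (j : ℕ) :
    E j / (2 * j)! = coeff (2 * j) (bernoulliQuarterSeries ℝ) := by
  have h := tendsto_nhds_unique (hE j) (tendsto_sum_alternating_one_div_half_add_pow j)
  rw [bernoulliQuarterSeries, coeff_mk]
  have hne : (-1 : ℝ) ^ j * Real.pi ^ (2 * j + 1) / 2 ≠ 0 := by positivity
  apply mul_left_cancel₀ hne
  rw [mul_pow] at h
  linear_combination h

end EulerNumbers

/-- For every `m ≥ 1`,
`∑_{j=0}^{m-1} 𝓔(2j) H_{2m-2j}/(Γ(2m-2j+1) Γ(2j+1))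
  = ∑_{k=1}^{m} 2^{2k}(2^{2k}-1) B_{2k}/((2m-2k+1) Γ(2m-2k+2) Γ(2k+1)) - 1/(2m Γ(2m+1))`. -/
theorem stmt_9 (m : ℕ) (hm : 1 ≤ m) (E : ℕ → ℝ) (hE : eulerChar E) :
    ∑ j ∈ Finset.range m,
        E j * ((harmonic (2*m - 2*j) : ℚ) : ℝ) /
          ((Nat.factorial (2*m - 2*j) : ℝ) * (Nat.factorial (2*j) : ℝ))
      = ∑ k ∈ Finset.Icc 1 m,
          2 ^ (2*k) * (2 ^ (2*k) - 1) * ((bernoulli (2*k) : ℚ) : ℝ) /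
            ((2 * (m : ℝ) - 2 * (k : ℝ) + 1) * (Nat.factorial (2*m - 2*k + 1) : ℝ) *
              (Nat.factorial (2*k) : ℝ))
        - 1 / (2 * (m : ℝ) * (Nat.factorial (2*m) : ℝ)) := by
  convert sum_coeff_bernoulliQuarterSeries_mul_harmonicSeries ℝ m using 1
  · refine sum_congr rfl fun j _ => ?_
    rw [← hE.div_factorial_eq_coeff, harmonicSeries, coeff_mk]
    ring
  · rw [sub_eq_neg_add]
    congr 1
    · simp [einSeries, pow_succ, neg_div]
    · refine sum_congr rfl fun k hk => ?_
      obtain ⟨hk₁, hkm⟩ := mem_Icc.mp hk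
      have hodd : (-1 : ℝ) ^ (2 * m - 2 * k + 1 + 1) = 1 :=
        Even.neg_one_pow ⟨m - k + 1, by lia⟩
      rw [tanhSubOneSeries, einSeries, coeff_mk, coeff_mk, hodd, show 2 * k - 1 + 1 = 2 * k by lia]
      push_cast [Nat.cast_sub (Nat.mul_le_mul_left 2 hkm)]
      rw [div_mul_div_comm, mul_one]
      congr 1
      ring
end

section
/- For every integer m ≥ 0, as the real variable t → ∞ one has 4 ∑_{k=0}^∞ (−1)^k/(t+1+2k) − 2 ∑_{k=0}^{m} 𝓔(2k)/t^{2k+1} = o(t^{−(2m+1)}); that is, the alternating Hurwitz zeta value η(1,(t+1)/2) = ∑_{k=0}^∞ (−1)^k/(k+(t+1)/2), which equals (ψ(t/4+3/4) − ψ(t/4+1/4))/2, admits the divergent asymptotic expansion ∑_{k=0}^∞ 𝓔(2k)/t^{2k+1}. -/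
open Filter Asymptotics

/-!
The function `1 / cosh` links the two sides. Its Laplace transform `L` satisfies
`L t + L (t + 2) = 2 / (t + 1)`, because `(1 + e^{-2x}) / cosh x = 2 e^{-x}`; telescoping this gives
`L t = 2 ∑ (-1)^k / (t + 1 + 2k)`. On the other hand, the real part of the cotangent series on the
line `re z = 1/4` is the partial fraction expansion
`π / cosh (π y) = ∑ (-1)^k 2 (k + 1/2) / ((k + 1/2)² + y²)`. Expanding each fraction as a finite
geometric sum identifies the Taylor coefficients of `1 / cosh` as `𝓔(2j) / (2j)!`, with a remainder
bounded by `C x^{2n}` on the whole real line; integrating this bound against `e^{-tx}` gives the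
asymptotic expansion of `L`, as in Watson's lemma.
-/

open scoped Nat Topology

section LaplaceTransform

open MeasureTheory Set

/-- The Laplace transform `∫₀^∞ f(x) e^{-tx} dx`, equal to the junk value `0` when the integral
does not converge absolutely. -/
noncomputable def laplaceTransform (f : ℝ → ℝ) (t : ℝ) : ℝ :=
  ∫ x in Ioi (0 : ℝ), f x * Real.exp (-t * x)

theorem integrableOn_pow_mul_exp_neg_mul_Ioi (n : ℕ) {t : ℝ} (ht : 0 < t) :
    IntegrableOn (fun x : ℝ => x ^ n * Real.exp (-t * x)) (Ioi 0) := by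
  have hn : (-1 : ℝ) < n := by linarith [n.cast_nonneg (α := ℝ)]
  simpa using integrableOn_rpow_mul_exp_neg_mul_rpow hn one_pos ht

theorem laplaceTransform_pow (n : ℕ) {t : ℝ} (ht : 0 < t) :
    laplaceTransform (fun x => x ^ n) t = n ! / t ^ (n + 1) := by
  have h := Real.integral_rpow_mul_exp_neg_mul_Ioi n.cast_add_one_pos ht
  rw [Real.Gamma_nat_eq_factorial, add_sub_cancel_right, ← Nat.cast_add_one,
    Real.rpow_natCast, one_div, inv_pow, inv_mul_eq_div] at h
  simpa only [laplaceTransform, Real.rpow_natCast, neg_mul] using h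

theorem laplaceTransform_sum_mul_pow {ι : Type*} (s : Finset ι) (c : ι → ℝ) (p : ι → ℕ) {t : ℝ}
    (ht : 0 < t) :
    laplaceTransform (fun x => ∑ i ∈ s, c i * x ^ p i) t
      = ∑ i ∈ s, c i * ((p i)! / t ^ (p i + 1)) := by
  simp only [laplaceTransform, Finset.sum_mul, mul_assoc]
  rw [integral_finsetSum _ fun i _ => (integrableOn_pow_mul_exp_neg_mul_Ioi (p i) ht).const_mul _]
  simp only [integral_const_mul, ← laplaceTransform_pow _ ht, laplaceTransform]

theorem abs_laplaceTransform_sub_sum_le_of_abs_sub_sum_le {ι : Type*} {s : Finset ι} {c : ι → ℝ}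
    {p : ι → ℕ} {f : ℝ → ℝ} {C t : ℝ} {q : ℕ} (ht : 0 < t)
    (hf : IntegrableOn (fun x => f x * Real.exp (-t * x)) (Ioi 0))
    (hfc : ∀ x, 0 < x → |f x - ∑ i ∈ s, c i * x ^ p i| ≤ C * x ^ q) :
    |laplaceTransform f t - ∑ i ∈ s, c i * ((p i)! / t ^ (p i + 1))| ≤ C * (q ! / t ^ (q + 1)) := by
  have hpoly : IntegrableOn (fun x => (∑ i ∈ s, c i * x ^ p i) * Real.exp (-t * x)) (Ioi 0) := by
    simp only [Finset.sum_mul, mul_assoc]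
    exact integrable_finsetSum _ fun i _ =>
      (integrableOn_pow_mul_exp_neg_mul_Ioi (p i) ht).const_mul _
  rw [← laplaceTransform_sum_mul_pow s c p ht, ← laplaceTransform_pow q ht, laplaceTransform,
    laplaceTransform, laplaceTransform, ← integral_sub hf hpoly, ← integral_const_mul,
    ← Real.norm_eq_abs]
  refine norm_integral_le_of_norm_le ((integrableOn_pow_mul_exp_neg_mul_Ioi q ht).const_mul C) ?_
  filter_upwards [ae_restrict_mem measurableSet_Ioi] with x hx
  rw [← sub_mul, Real.norm_eq_abs, abs_mul, Real.abs_exp, ← mul_assoc]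
  exact mul_le_mul_of_nonneg_right (hfc x hx) (Real.exp_pos _).le

end LaplaceTransform

section LaplaceSech

open MeasureTheory Set

variable {t : ℝ}

theorem inv_cosh_mul_one_add_exp (x : ℝ) :
    (Real.cosh x)⁻¹ * (1 + Real.exp (-2 * x)) = 2 * Real.exp (-x) := by
  rw [inv_mul_eq_iff_eq_mul₀ (Real.cosh_pos x).ne', Real.cosh_eq]
  have hsq : Real.exp (-2 * x) = Real.exp (-x) * Real.exp (-x) := by
    rw [← Real.exp_add]; ring_nf
  have hinv : Real.exp x * Real.exp (-x) = 1 := by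
    rw [← Real.exp_add, add_neg_cancel, Real.exp_zero]
  linear_combination hsq - hinv

theorem inv_cosh_le_two_mul_exp_neg (x : ℝ) : (Real.cosh x)⁻¹ ≤ 2 * Real.exp (-x) := by
  rw [← inv_cosh_mul_one_add_exp]
  exact le_mul_of_one_le_right (by positivity) (by linarith [Real.exp_pos (-2 * x)])

theorem inv_cosh_mul_exp_le (t x : ℝ) :
    (Real.cosh x)⁻¹ * Real.exp (-t * x) ≤ 2 * Real.exp (-(t + 1) * x) :=
  calc (Real.cosh x)⁻¹ * Real.exp (-t * x)
      ≤ 2 * Real.exp (-x) * Real.exp (-t * x) := by gcongr; exact inv_cosh_le_two_mul_exp_neg x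
    _ = 2 * Real.exp (-(t + 1) * x) := by rw [mul_assoc, ← Real.exp_add]; ring_nf

theorem integrableOn_two_mul_exp_neg_Ioi (ht : -1 < t) :
    IntegrableOn (fun x : ℝ => 2 * Real.exp (-(t + 1) * x)) (Ioi 0) :=
  (integrableOn_exp_mul_Ioi (by linarith) 0).const_mul 2

theorem integral_two_mul_exp_neg_Ioi (ht : -1 < t) :
    ∫ x in Ioi (0 : ℝ), 2 * Real.exp (-(t + 1) * x) = 2 / (t + 1) := by
  rw [integral_const_mul, integral_exp_mul_Ioi (by linarith)]
  simp only [mul_zero, Real.exp_zero, neg_div_neg_eq, mul_one_div]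

theorem integrableOn_inv_cosh_mul_exp (ht : -1 < t) :
    IntegrableOn (fun x : ℝ => (Real.cosh x)⁻¹ * Real.exp (-t * x)) (Ioi 0) := by
  refine (integrableOn_two_mul_exp_neg_Ioi ht).mono' ?_ (ae_of_all _ fun x => ?_)
  · have hcosh (x : ℝ) : Real.cosh x ≠ 0 := (Real.cosh_pos x).ne'
    exact Continuous.aestronglyMeasurable (by fun_prop (disch := assumption))
  · rw [Real.norm_of_nonneg (by positivity)]
    exact inv_cosh_mul_exp_le t x

theorem abs_laplaceTransform_inv_cosh_le (ht : -1 < t) :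
    |laplaceTransform (fun x => (Real.cosh x)⁻¹) t| ≤ 2 / (t + 1) := by
  rw [← integral_two_mul_exp_neg_Ioi ht, ← Real.norm_eq_abs]
  refine norm_integral_le_of_norm_le (integrableOn_two_mul_exp_neg_Ioi ht) (ae_of_all _ fun x => ?_)
  rw [Real.norm_of_nonneg (by positivity)]
  exact inv_cosh_mul_exp_le t x

theorem laplaceTransform_inv_cosh_add (ht : -1 < t) :
    laplaceTransform (fun x => (Real.cosh x)⁻¹) t
      + laplaceTransform (fun x => (Real.cosh x)⁻¹) (t + 2) = 2 / (t + 1) := by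
  rw [laplaceTransform, laplaceTransform, ← integral_add (integrableOn_inv_cosh_mul_exp ht)
    (integrableOn_inv_cosh_mul_exp (by linarith)), ← integral_two_mul_exp_neg_Ioi ht]
  refine integral_congr_ae (ae_of_all _ fun x => ?_)
  calc (Real.cosh x)⁻¹ * Real.exp (-t * x) + (Real.cosh x)⁻¹ * Real.exp (-(t + 2) * x)
      = (Real.cosh x)⁻¹ * (1 + Real.exp (-2 * x)) * Real.exp (-t * x) := by
        rw [show -(t + 2) * x = -2 * x + -t * x by ring, Real.exp_add]; ring
    _ = 2 * Real.exp (-(t + 1) * x) := by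
        rw [inv_cosh_mul_one_add_exp, mul_assoc, ← Real.exp_add]; ring_nf

theorem sum_neg_one_pow_div_eq_laplaceTransform_inv_cosh (ht : -1 < t) (n : ℕ) :
    ∑ k ∈ Finset.range n, (-1 : ℝ) ^ k / (t + 1 + 2 * k)
      = (laplaceTransform (fun x => (Real.cosh x)⁻¹) t
          - (-1) ^ n * laplaceTransform (fun x => (Real.cosh x)⁻¹) (t + 2 * n)) / 2 := by
  induction n with
  | zero => simp
  | succ n ih =>
    have hn : -1 < t + 2 * n := by linarith [n.cast_nonneg (α := ℝ)]
    have hstep := laplaceTransform_inv_cosh_add hn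
    rw [show t + 2 * (n : ℝ) + 2 = t + 2 * (n + 1 : ℕ) by push_cast; ring,
      show t + 2 * (n : ℝ) + 1 = t + 1 + 2 * n by ring] at hstep
    rw [Finset.sum_range_succ, ih]
    linear_combination (-(-1) ^ n / 2) * hstep

theorem tendsto_laplaceTransform_inv_cosh_atTop :
    Tendsto (laplaceTransform fun x => (Real.cosh x)⁻¹) atTop (𝓝 0) := by
  refine squeeze_zero_norm' ?_
    ((tendsto_atTop_add_const_right atTop (1 : ℝ) tendsto_id).const_div_atTop 2)
  filter_upwards [eventually_gt_atTop (-1)] with t ht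
  exact abs_laplaceTransform_inv_cosh_le ht

theorem tendsto_sum_neg_one_pow_div (ht : -1 < t) :
    Tendsto (fun n => ∑ k ∈ Finset.range n, (-1 : ℝ) ^ k / (t + 1 + 2 * (k : ℝ))) atTop
      (𝓝 (laplaceTransform (fun x => (Real.cosh x)⁻¹) t / 2)) := by
  have harg : Tendsto (fun n : ℕ => t + 2 * (n : ℝ)) atTop atTop :=
    tendsto_atTop_add_const_left _ t (tendsto_natCast_atTop_atTop.const_mul_atTop two_pos)
  have hrem : Tendsto (fun n : ℕ => (-1 : ℝ) ^ n *
      laplaceTransform (fun x => (Real.cosh x)⁻¹) (t + 2 * n)) atTop (𝓝 0) := by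
    rw [tendsto_zero_iff_norm_tendsto_zero]
    simpa only [norm_mul, norm_pow, norm_neg, norm_one, one_pow, one_mul, norm_zero,
      Function.comp_apply] using
      (tendsto_laplaceTransform_inv_cosh_atTop.comp harg).norm
  simp only [sum_neg_one_pow_div_eq_laplaceTransform_inv_cosh ht]
  simpa only [sub_zero] using (tendsto_const_nhds.sub hrem).div_const 2

end LaplaceSech

section PartialFractions

theorem re_cot (z : ℂ) :
    (Complex.cot z).re = Real.sin (2 * z.re) / (Real.cosh (2 * z.im) - Real.cos (2 * z.re)) := by
  obtain ⟨a, b⟩ := z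
  have hsin : Complex.sin ⟨a, b⟩ = ⟨Real.sin a * Real.cosh b, Real.cos a * Real.sinh b⟩ := by
    simp only [Complex.mk_eq_add_mul_I, Complex.sin_add_mul_I]
    push_cast; ring
  have hcos : Complex.cos ⟨a, b⟩ = ⟨Real.cos a * Real.cosh b, -(Real.sin a * Real.sinh b)⟩ := by
    simp only [Complex.mk_eq_add_mul_I, Complex.cos_add_mul_I]
    push_cast; ring
  have hnum : Real.cos a * Real.cosh b * (Real.sin a * Real.cosh b)
      + -(Real.sin a * Real.sinh b) * (Real.cos a * Real.sinh b) = Real.sin (2 * a) / 2 := by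
    rw [Real.sin_two_mul]
    linear_combination Real.sin a * Real.cos a * Real.cosh_sq b
  have hden : Real.sin a * Real.cosh b * (Real.sin a * Real.cosh b)
      + Real.cos a * Real.sinh b * (Real.cos a * Real.sinh b)
      = (Real.cosh (2 * b) - Real.cos (2 * a)) / 2 := by
    rw [Real.cosh_two_mul, Real.cos_two_mul]
    linear_combination (Real.sinh b ^ 2 + 1) * Real.sin_sq_add_cos_sq a
      + (Real.sin a ^ 2 - 1 / 2) * Real.cosh_sq b
  rw [Complex.cot, hsin, hcos, Complex.div_re, Complex.normSq_mk, ← add_div, hnum, hden,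
    div_div_div_cancel_right₀ two_ne_zero]

theorem hasSum_re_cot {z : ℂ} (hz : z ∈ Complex.integerComplement) :
    HasSum (fun n : ℕ => (z.re - (n + 1)) / ((z.re - (n + 1)) ^ 2 + z.im ^ 2)
        + (z.re + (n + 1)) / ((z.re + (n + 1)) ^ 2 + z.im ^ 2))
      ((Real.pi * Complex.cot (Real.pi * z)).re - z.re / (z.re ^ 2 + z.im ^ 2)) := by
  have h := Complex.hasSum_re (summable_cotTerm hz).hasSum
  simp only [cotTerm] at h
  rw [← cot_series_rep' hz] at h
  simpa [Complex.inv_re, Complex.normSq_apply, ← sq] using h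

theorem sum_range_two_mul_add_one_neg_one_pow_mul {R : Type*} [Ring R] (f : ℕ → R) (N : ℕ) :
    ∑ k ∈ Finset.range (2 * N + 1), (-1) ^ k * f k
      = f 0 + ∑ n ∈ Finset.range N, (f (2 * n + 2) - f (2 * n + 1)) := by
  induction N with
  | zero => simp
  | succ N ih =>
    rw [show 2 * (N + 1) + 1 = 2 * N + 1 + 1 + 1 by ring, Finset.sum_range_succ,
      Finset.sum_range_succ, ih, Finset.sum_range_succ]
    have hsign : (-1 : R) ^ (2 * N) = 1 := (even_two_mul N).neg_one_pow
    simp only [pow_succ, hsign, one_mul, neg_mul, mul_neg, neg_neg, add_assoc, sub_eq_neg_add]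

theorem tendsto_partialFraction_pi_div_cosh (y : ℝ) :
    Tendsto (fun N : ℕ => ∑ k ∈ Finset.range (2 * N + 1),
        2 * (-1) ^ k * (((k : ℝ) + 1 / 2) / (((k : ℝ) + 1 / 2) ^ 2 + y ^ 2))) atTop
      (𝓝 (Real.pi / Real.cosh (Real.pi * y))) := by
  set z : ℂ := ⟨1 / 4, y / 2⟩ with hz
  have hmem : z ∈ Complex.integerComplement := by
    rintro ⟨n, hn⟩
    have hre : (n : ℝ) = 1 / 4 := by simpa [hz] using congrArg Complex.re hn
    have : (4 * n : ℤ) = 1 := by exact_mod_cast (by linarith : (4 * n : ℝ) = 1)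
    omega
  have hcot : (Real.pi * Complex.cot (Real.pi * z)).re = Real.pi / Real.cosh (Real.pi * y) := by
    rw [Complex.re_ofReal_mul, re_cot, Complex.re_ofReal_mul, Complex.im_ofReal_mul,
      show 2 * (Real.pi * z.re) = Real.pi / 2 by simp only [hz]; ring,
      show 2 * (Real.pi * z.im) = Real.pi * y by simp only [hz]; ring,
      Real.sin_pi_div_two, Real.cos_pi_div_two, sub_zero, mul_one_div]
  have hsum := (hasSum_re_cot hmem).tendsto_sum_nat.const_add (z.re / (z.re ^ 2 + z.im ^ 2))
  rw [hcot, add_sub_cancel] at hsum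
  refine hsum.congr fun N => ?_
  have hscale (u a : ℝ) (hua : 2 * u = a) :
      u / (u ^ 2 + (y / 2) ^ 2) = 2 * (a / (a ^ 2 + y ^ 2)) := by
    rw [← hua, show (2 * u) ^ 2 + y ^ 2 = 4 * (u ^ 2 + (y / 2) ^ 2) by ring,
      ← mul_div_assoc, show 2 * (2 * u) = 4 * u by ring, mul_div_mul_left _ _ four_ne_zero]
  have hodd (a : ℝ) : -a / ((-a) ^ 2 + y ^ 2) = -(a / (a ^ 2 + y ^ 2)) := by rw [neg_sq, neg_div]
  simp only [mul_assoc, ← Finset.mul_sum]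
  rw [sum_range_two_mul_add_one_neg_one_pow_mul fun k : ℕ =>
    ((k : ℝ) + 1 / 2) / (((k : ℝ) + 1 / 2) ^ 2 + y ^ 2), mul_add, Finset.mul_sum,
    hscale (1 / 4) ((0 : ℕ) + 1 / 2) (by norm_num)]
  congr 1
  refine Finset.sum_congr rfl fun n _ => ?_
  rw [hscale (1 / 4 - (n + 1)) (-((2 * n + 1 : ℕ) + 1 / 2)) (by push_cast; ring), hodd,
    hscale (1 / 4 + (n + 1)) ((2 * n + 2 : ℕ) + 1 / 2) (by push_cast; ring)]
  ring

theorem div_sq_add_sq_sub_geom_sum {K : Type*} [Field K] {a x : K} (ha : a ≠ 0)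
    (hax : a ^ 2 + x ^ 2 ≠ 0) (n : ℕ) :
    a / (a ^ 2 + x ^ 2) - ∑ j ∈ Finset.range n, (-1) ^ j * x ^ (2 * j) / a ^ (2 * j + 1)
      = (-1) ^ n * x ^ (2 * n) / a ^ (2 * n) * (a / (a ^ 2 + x ^ 2)) := by
  induction n with
  | zero => simp
  | succ n ih =>
    rw [Finset.sum_range_succ, ← sub_sub, ih, pow_succ (-1 : K), mul_add_one, pow_add x, pow_add a,
      pow_succ a]
    field_simp
    ring

theorem abs_div_sq_add_sq_sub_geom_sum_le {a : ℝ} (ha : 0 < a) (x : ℝ) (n : ℕ) :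
    |a / (a ^ 2 + x ^ 2) - ∑ j ∈ Finset.range n, (-1) ^ j * x ^ (2 * j) / a ^ (2 * j + 1)|
      ≤ x ^ (2 * n) / a ^ (2 * n + 1) := by
  have hx : 0 ≤ x ^ (2 * n) := (even_two_mul n).pow_nonneg x
  have hle : a / (a ^ 2 + x ^ 2) ≤ 1 / a := by
    rw [div_le_div_iff₀ (by positivity) ha]
    nlinarith [sq_nonneg x]
  rw [div_sq_add_sq_sub_geom_sum ha.ne' (by positivity), abs_mul, abs_div, abs_mul, abs_neg_one_pow,
    one_mul, abs_of_nonneg hx, abs_of_pos (by positivity), abs_of_pos (by positivity)]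
  calc x ^ (2 * n) / a ^ (2 * n) * (a / (a ^ 2 + x ^ 2)) ≤ x ^ (2 * n) / a ^ (2 * n) * (1 / a) := by
        gcongr
    _ = x ^ (2 * n) / a ^ (2 * n + 1) := by rw [div_mul_div_comm, mul_one, pow_succ]

theorem abs_sub_sum_le_of_tendsto_partialFraction {ι κ : Type*} {l : Filter ι} [l.NeBot]
    {F : ι → Finset κ} {a s : κ → ℝ} {σ : ℕ → ℝ} {x S : ℝ} {n : ℕ} (ha : ∀ k, 0 < a k)
    (hsum : Summable fun k => |s k| / a k ^ (2 * n + 1))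
    (hS : Tendsto (fun i => ∑ k ∈ F i, s k * (a k / (a k ^ 2 + x ^ 2))) l (𝓝 S))
    (hσ : ∀ j, Tendsto (fun i => ∑ k ∈ F i, s k / a k ^ (2 * j + 1)) l (𝓝 (σ j))) :
    |S - ∑ j ∈ Finset.range n, (-1) ^ j * x ^ (2 * j) * σ j|
      ≤ (∑' k, |s k| / a k ^ (2 * n + 1)) * x ^ (2 * n) := by
  have hx : 0 ≤ x ^ (2 * n) := (even_two_mul n).pow_nonneg x
  have hlim := (hS.sub (tendsto_finsetSum (Finset.range n) fun j _ =>
    (hσ j).const_mul ((-1) ^ j * x ^ (2 * j)))).abs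
  refine le_of_tendsto hlim (Eventually.of_forall fun i => ?_)
  have hswap : ∑ j ∈ Finset.range n, (-1) ^ j * x ^ (2 * j) * ∑ k ∈ F i, s k / a k ^ (2 * j + 1)
      = ∑ k ∈ F i, s k * ∑ j ∈ Finset.range n, (-1) ^ j * x ^ (2 * j) / a k ^ (2 * j + 1) := by
    simp only [Finset.mul_sum]
    rw [Finset.sum_comm]
    exact Finset.sum_congr rfl fun k _ => Finset.sum_congr rfl fun j _ => by ring
  rw [hswap, ← Finset.sum_sub_distrib]
  calc _ ≤ ∑ k ∈ F i, |s k| / a k ^ (2 * n + 1) * x ^ (2 * n) := by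
        refine (Finset.abs_sum_le_sum_abs _ _).trans (Finset.sum_le_sum fun k _ => ?_)
        rw [← mul_sub, abs_mul, div_mul_eq_mul_div, mul_div_assoc]
        gcongr
        exact abs_div_sq_add_sq_sub_geom_sum_le (ha k) x n
    _ ≤ (∑' k, |s k| / a k ^ (2 * n + 1)) * x ^ (2 * n) := by
        rw [← Finset.sum_mul]
        gcongr
        exact hsum.sum_le_tsum _ fun k _ => div_nonneg (abs_nonneg _) (pow_pos (ha k) _).le

end PartialFractions

section EulerNumbers

variable {E : ℕ → ℝ}

theorem abs_pi_div_cosh_sub_sum_le (hE : eulerChar E) {n : ℕ} (hn : n ≠ 0) (y : ℝ) :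
    |Real.pi / Real.cosh (Real.pi * y)
        - ∑ j ∈ Finset.range n, Real.pi * (E j / (2 * j)! * (Real.pi * y) ^ (2 * j))|
      ≤ (∑' k : ℕ, 2 / ((k : ℝ) + 1 / 2) ^ (2 * n + 1)) * y ^ (2 * n) := by
  have habs (k : ℕ) : |2 * (-1 : ℝ) ^ k| = 2 := by simp
  have hsum : Summable fun k : ℕ => |2 * (-1 : ℝ) ^ k| / ((k : ℝ) + 1 / 2) ^ (2 * n + 1) := by
    have hn' : (1 : ℝ) < (2 * n + 1 : ℕ) := by exact_mod_cast (by omega : 1 < 2 * n + 1)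
    have h := ((Real.summable_one_div_nat_add_rpow (1 / 2) _).2 hn').mul_left 2
    refine h.congr fun k => ?_
    rw [habs, abs_of_pos (by positivity), Real.rpow_natCast, mul_one_div]
  have hodd : Tendsto (fun N : ℕ => 2 * N + 1) atTop atTop :=
    tendsto_atTop_mono (fun N => show N ≤ 2 * N + 1 by omega) tendsto_id
  have hσ (j : ℕ) : Tendsto (fun N : ℕ => ∑ k ∈ Finset.range (2 * N + 1),
      2 * (-1 : ℝ) ^ k / ((k : ℝ) + 1 / 2) ^ (2 * j + 1)) atTop
      (𝓝 (2 * ((-1) ^ j * Real.pi ^ (2 * j + 1) * E j / (2 * (2 * j)!)))) := by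
    simp only [mul_div_assoc (2 : ℝ), ← Finset.mul_sum]
    exact ((hE j).comp hodd).const_mul 2
  have hcoeff (j : ℕ) :
      (-1) ^ j * y ^ (2 * j) * (2 * ((-1) ^ j * Real.pi ^ (2 * j + 1) * E j / (2 * (2 * j)!)))
        = Real.pi * (E j / (2 * j)! * (Real.pi * y) ^ (2 * j)) := by
    have hsign : (-1 : ℝ) ^ j * (-1) ^ j = 1 := by rw [← mul_pow]; norm_num
    linear_combination (Real.pi ^ (2 * j + 1) * y ^ (2 * j) * (E j / (2 * j)!)) * hsign
  have h := abs_sub_sum_le_of_tendsto_partialFraction (fun k : ℕ => by positivity) hsum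
    (tendsto_partialFraction_pi_div_cosh y) hσ
  simpa only [habs, hcoeff] using h

theorem exists_abs_inv_cosh_sub_sum_le (hE : eulerChar E) {n : ℕ} (hn : n ≠ 0) :
    ∃ C : ℝ, ∀ x : ℝ,
      |(Real.cosh x)⁻¹ - ∑ j ∈ Finset.range n, E j / (2 * j)! * x ^ (2 * j)| ≤ C * x ^ (2 * n) := by
  refine ⟨(∑' k : ℕ, 2 / ((k : ℝ) + 1 / 2) ^ (2 * n + 1)) / Real.pi ^ (2 * n + 1), fun x => ?_⟩
  have h := abs_pi_div_cosh_sub_sum_le hE hn (x / Real.pi)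
  rw [mul_div_cancel₀ _ Real.pi_ne_zero, ← Finset.mul_sum, div_eq_mul_inv, ← mul_sub, abs_mul,
    abs_of_pos Real.pi_pos, ← le_div_iff₀' Real.pi_pos] at h
  refine h.trans_eq ?_
  rw [div_pow, pow_succ]
  field_simp

theorem isBigO_laplaceTransform_inv_cosh_sub_sum (hE : eulerChar E) {n : ℕ} (hn : n ≠ 0) :
    (fun t => laplaceTransform (fun x => (Real.cosh x)⁻¹) t
      - ∑ k ∈ Finset.range n, E k / t ^ (2 * k + 1)) =O[atTop] fun t => (t ^ (2 * n + 1))⁻¹ := by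
  obtain ⟨C, hC⟩ := exists_abs_inv_cosh_sub_sum_le hE hn
  refine IsBigO.of_bound (C * (2 * n)!) ?_
  filter_upwards [eventually_gt_atTop 0] with t ht
  have h := abs_laplaceTransform_sub_sum_le_of_abs_sub_sum_le ht
    (integrableOn_inv_cosh_mul_exp (by linarith)) fun x _ => hC x
  have hcoeff (k : ℕ) : E k / (2 * k)! * ((2 * k)! / t ^ (2 * k + 1)) = E k / t ^ (2 * k + 1) :=
    div_mul_div_cancel₀ (by positivity)
  rw [Real.norm_eq_abs, Real.norm_of_nonneg (by positivity), mul_assoc, ← div_eq_mul_inv]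
  simpa only [hcoeff] using h

end EulerNumbers

/-- For every `m ≥ 0`, writing `g t` for the sum of the convergent alternating series
`∑_{k=0}^∞ (-1)^k/(t+1+2k)` (which is `η(1,(t+1)/2)/2`, i.e. `(ψ(t/4+3/4) - ψ(t/4+1/4))/4`),
one has `4 g t - 2 ∑_{k=0}^{m} 𝓔(2k)/t^{2k+1} = o(t^{-(2m+1)})` as `t → ∞`;
that is, `2 g t` admits the divergent asymptotic expansion `∑_{k=0}^∞ 𝓔(2k)/t^{2k+1}`. -/
theorem stmt_10 (m : ℕ) (E : ℕ → ℝ) (hE : eulerChar E) (g : ℝ → ℝ)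
    (hg : ∀ t : ℝ, 0 < t →
      Tendsto (fun n => ∑ k ∈ Finset.range n, (-1 : ℝ) ^ k / (t + 1 + 2 * (k : ℝ)))
        atTop (nhds (g t))) :
    (fun t : ℝ => 4 * g t - 2 * ∑ k ∈ Finset.range (m + 1), E k / t ^ (2*k + 1))
      =o[atTop] fun t : ℝ => (t ^ (2*m + 1))⁻¹ := by
  have hg_eq : (fun t => 4 * g t - 2 * ∑ k ∈ Finset.range (m + 1), E k / t ^ (2 * k + 1)) =ᶠ[atTop]
      fun t => 2 * (laplaceTransform (fun x => (Real.cosh x)⁻¹) t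
        - ∑ k ∈ Finset.range (m + 1), E k / t ^ (2 * k + 1)) := by
    filter_upwards [eventually_gt_atTop 0] with t ht
    rw [tendsto_nhds_unique (hg t ht) (tendsto_sum_neg_one_pow_div (by linarith))]
    ring
  have hO := (isBigO_laplaceTransform_inv_cosh_sub_sum hE m.succ_ne_zero).const_mul_left 2
  have ho : (fun t : ℝ => (t ^ (2 * (m + 1) + 1))⁻¹) =o[atTop] fun t => (t ^ (2 * m + 1))⁻¹ := by
    refine (isLittleO_pow_pow_atTop_of_lt (by omega)).inv_rev ?_
    filter_upwards [eventually_ne_atTop 0] with t ht h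
    exact absurd h (pow_ne_zero _ ht)
  exact hg_eq.trans_isLittleO (hO.trans_isLittleO ho)
end

section
/- For every complex number s ≠ 1, 2^{−s}(1 − 2^{1−s}) ζ(s) = −sin(πs/2) ∑_{k=0}^∞ E_s(π(k+1/2)) + (1/2) ∫_{−π/2}^{π/2} e^{−(π/2) sin θ} · sin((π/2) cos θ + (s−1)θ) / (cosh(π sin θ) − cos(π cos θ)) dθ, where the series converges absolutely. -/
open MeasureTheory Filter

/-- The generalized exponential integral `E_s(z) = ∫₁^∞ v^{-s} e^{-z v} dv`. -/
noncomputable def expInt (s z : ℂ) : ℂ :=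
  ∫ v in Set.Ioi (1 : ℝ), (v : ℂ) ^ (-s) * Complex.exp (-z * v)

/-!
Expanding `1 / (2 sinh (x / 2))` as `∑ exp (-(k + 1 / 2) x)` shows that its Mellin transform is
`Γ(w) (2 ^ w - 1) ζ(w)`. For `re s < 0`, taking `w = 1 - s` and using the functional equation of
`ζ`, the left-hand side becomes `-sin (π s / 2) ∫₀^∞ v ^ (-s) / (2 sinh (π v / 2)) dv`.
Integrating over `v > 1` term by term gives the series of exponential integrals. The part over
`0 < v ≤ 1` is an integral of `z ^ (-s) / sin (π z / 2)` along the two halves of the segment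
`[-i, i]`, which Cauchy's theorem moves to the unit arc `z = exp (i θ)`, `|θ| ≤ π / 2`; pairing `θ`
with `-θ` there makes the denominators `sin (π z / 2)` combine into
`cosh (π sin θ) - cos (π cos θ)`. Both sides are holomorphic on `ℂ ∖ {1}`, so the identity extends
to all `s ≠ 1`.
-/

section

open Set Complex Asymptotics
open scoped Real Topology

section IntervalIntegral

variable {E : Type*} [NormedAddCommGroup E] [NormedSpace ℝ E]

theorem differentiable_intervalIntegral_of_continuous_deriv {𝕜 : Type*} [RCLike 𝕜]
    [NormedSpace 𝕜 E] {F F' : 𝕜 → ℝ → E} (a b : ℝ) (hF : ∀ x, Continuous (F x))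
    (hF' : Continuous (Function.uncurry F')) (hderiv : ∀ x t, HasDerivAt (F · t) (F' x t) x) :
    Differentiable 𝕜 fun x => ∫ t in a..b, F x t := by
  intro x
  obtain ⟨C, hC⟩ := ((isCompact_closedBall x 1).prod
    (isCompact_uIcc (a := a) (b := b))).exists_bound_of_continuousOn hF'.continuousOn
  exact (intervalIntegral.hasDerivAt_integral_of_dominated_loc_of_deriv_le (bound := fun _ => C)
    (Metric.closedBall_mem_nhds x one_pos)
    (Eventually.of_forall fun y => (hF y).aestronglyMeasurable)
    ((hF x).intervalIntegrable _ _)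
    (hF'.comp (Continuous.prodMk_right x)).aestronglyMeasurable
    (Eventually.of_forall fun t ht y hy => hC (y, t) ⟨hy, uIoc_subset_uIcc ht⟩)
    intervalIntegrable_const
    (Eventually.of_forall fun t _ y _ => hderiv y t)).2.differentiableAt

theorem intervalIntegral_neg_congr_of_add_comp_neg {f g : ℝ → E} {a : ℝ}
    (hf : IntervalIntegrable f volume (-a) a) (hg : IntervalIntegrable g volume (-a) a)
    (h : ∀ x, f x + f (-x) = g x + g (-x)) :
    ∫ x in -a..a, f x = ∫ x in -a..a, g x := by
  have two_smul_integral {u : ℝ → E} (hu : IntervalIntegrable u volume (-a) a) :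
      (2 : ℝ) • ∫ x in -a..a, u x = ∫ x in -a..a, (u x + u (-x)) := by
    have hu' : IntervalIntegrable (fun x => u (-x)) volume (-a) a := by
      simpa using ((IntervalIntegrable.iff_comp_neg (f := u)).mp hu).symm
    rw [intervalIntegral.integral_add hu hu', intervalIntegral.integral_comp_neg, neg_neg,
      two_smul]
  apply smul_right_injective E (two_ne_zero' ℝ)
  simp only [two_smul_integral hf, two_smul_integral hg, h]

end IntervalIntegral

section TruncatedMellin

variable {E : Type*} [NormedAddCommGroup E] {f : ℝ → E} {a c : ℝ}

theorem indicator_Ioi_isBigO_nhdsGT_zero (hc : 0 < c) (f : ℝ → E) (g : ℝ → ℝ) :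
    (Ioi c).indicator f =O[𝓝[>] 0] g := by
  refine (isBigO_zero (E' := E) g _).congr' ?_ EventuallyEq.rfl
  filter_upwards [mem_nhdsWithin_of_mem_nhds (Iio_mem_nhds hc)] with t ht
  exact (indicator_of_notMem (notMem_Ioi.mpr (le_of_lt ht)) f).symm

theorem indicator_Ioi_isBigO_atTop {g : ℝ → ℝ} (hf : f =O[atTop] g) :
    (Ioi c).indicator f =O[atTop] g := by
  refine hf.congr' ?_ EventuallyEq.rfl
  filter_upwards [eventually_gt_atTop c] with t ht
  exact (indicator_of_mem (mem_Ioi.mpr ht) f).symm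

theorem locallyIntegrableOn_indicator_Ioi {s : Set ℝ} (hf : LocallyIntegrableOn f s) :
    LocallyIntegrableOn ((Ioi c).indicator f) s := fun x hx => by
  obtain ⟨u, hu, h⟩ := hf x hx
  exact ⟨u, hu, h.indicator measurableSet_Ioi⟩

variable [NormedSpace ℂ E]

theorem cpow_smul_indicator_Ioi (f : ℝ → E) (s : ℂ) :
    (fun t : ℝ => (t : ℂ) ^ (s - 1) • (Ioi c).indicator f t) =
      (Ioi c).indicator fun t : ℝ => (t : ℂ) ^ (s - 1) • f t :=
  (indicator_smul _ _ _).symm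

theorem mellin_indicator_Ioi (hc : 0 ≤ c) (f : ℝ → E) (s : ℂ) :
    mellin ((Ioi c).indicator f) s = ∫ t in Ioi c, (t : ℂ) ^ (s - 1) • f t := by
  rw [mellin, cpow_smul_indicator_Ioi, setIntegral_indicator measurableSet_Ioi,
    inter_eq_right.mpr (Ioi_subset_Ioi hc)]

theorem mellinConvergent_indicator_Ioi_iff (hc : 0 ≤ c) (f : ℝ → E) (s : ℂ) :
    MellinConvergent ((Ioi c).indicator f) s ↔
      IntegrableOn (fun t : ℝ => (t : ℂ) ^ (s - 1) • f t) (Ioi c) := by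
  rw [MellinConvergent, cpow_smul_indicator_Ioi, integrableOn_indicator_iff measurableSet_Ioi,
    inter_eq_left.mpr (Ioi_subset_Ioi hc)]

theorem integrableOn_Ioi_cpow_smul (hc : 0 < c) (ha : 0 < a) (hf : LocallyIntegrableOn f (Ioi 0))
    (hf_top : f =O[atTop] fun t => Real.exp (-a * t)) (s : ℂ) :
    IntegrableOn (fun t : ℝ => (t : ℂ) ^ (s - 1) • f t) (Ioi c) :=
  (mellinConvergent_indicator_Ioi_iff hc.le f s).mp <|
    mellinConvergent_of_isBigO_rpow_exp ha (locallyIntegrableOn_indicator_Ioi hf)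
      (indicator_Ioi_isBigO_atTop hf_top) (indicator_Ioi_isBigO_nhdsGT_zero hc f _)
      (sub_one_lt s.re)

theorem differentiable_setIntegral_Ioi_cpow_smul (hc : 0 < c) (ha : 0 < a)
    (hf : LocallyIntegrableOn f (Ioi 0)) (hf_top : f =O[atTop] fun t => Real.exp (-a * t)) :
    Differentiable ℂ fun s : ℂ => ∫ t in Ioi c, (t : ℂ) ^ (s - 1) • f t := by
  simp only [← mellin_indicator_Ioi hc.le]
  exact fun s => mellin_differentiableAt_of_isBigO_rpow_exp ha
    (locallyIntegrableOn_indicator_Ioi hf) (indicator_Ioi_isBigO_atTop hf_top)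
    (indicator_Ioi_isBigO_nhdsGT_zero hc f _) (sub_one_lt s.re)

theorem abs_exp_smul_cpow_smul (f : ℝ → E) (s : ℂ) (t : ℝ) :
    |Real.exp t| • ((Real.exp t : ℂ) ^ (s - 1) • f (Real.exp t)) =
      exp (s * t) • f (Real.exp t) := by
  rw [abs_of_pos t.exp_pos, ← coe_smul, smul_smul]
  congr 1
  rw [cpow_def_of_ne_zero (by simp), ← ofReal_log t.exp_pos.le, Real.log_exp, ofReal_exp,
    ← Complex.exp_add]
  congr 1
  ring

theorem integral_Ioc_cpow_smul_eq_integral_Iic_exp (f : ℝ → E) (s : ℂ) (b : ℝ) :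
    ∫ v in Ioc 0 (Real.exp b), (v : ℂ) ^ (s - 1) • f v =
      ∫ t in Iic b, exp (s * t) • f (Real.exp t) := by
  rw [← Real.image_exp_Iic, integral_image_eq_integral_abs_deriv_smul measurableSet_Iic
    (fun t _ => (Real.hasDerivAt_exp t).hasDerivWithinAt) Real.exp_injective.injOn]
  simp only [abs_exp_smul_cpow_smul]

theorem integrableOn_Ioc_cpow_smul_iff_integrableOn_Iic_exp (f : ℝ → E) (s : ℂ) (b : ℝ) :
    IntegrableOn (fun v : ℝ => (v : ℂ) ^ (s - 1) • f v) (Ioc 0 (Real.exp b)) ↔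
      IntegrableOn (fun t : ℝ => exp (s * t) • f (Real.exp t)) (Iic b) := by
  rw [← Real.image_exp_Iic, integrableOn_image_iff_integrableOn_abs_deriv_smul measurableSet_Iic
    (fun t _ => (Real.hasDerivAt_exp t).hasDerivWithinAt) Real.exp_injective.injOn]
  simp only [abs_exp_smul_cpow_smul]

theorem mellin_eq_integral_Ioc_add_integral_Ioi (hc : 0 ≤ c) {s : ℂ} (hf : MellinConvergent f s) :
    mellin f s = (∫ t in Ioc 0 c, (t : ℂ) ^ (s - 1) • f t) +
      ∫ t in Ioi c, (t : ℂ) ^ (s - 1) • f t := by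
  rw [mellin, ← Ioc_union_Ioi_eq_Ioi hc]
  exact setIntegral_union (Ioc_disjoint_Ioi le_rfl) measurableSet_Ioi
    (hf.mono_set Ioc_subset_Ioi_self) (hf.mono_set (Ioi_subset_Ioi hc))

end TruncatedMellin

section HalfCsch

/-- Half the hyperbolic cosecant of `x / 2`, i.e. `1 / (2 sinh (x / 2))`. It is the sum of the
exponentials `exp (-(k + 1 / 2) x)` for `x > 0`; at `x = 0` its value is the junk value `0`. -/
noncomputable def halfCsch (x : ℝ) : ℝ := (2 * Real.sinh (x / 2))⁻¹

variable {x : ℝ}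

theorem halfCsch_nonneg (hx : 0 ≤ x) : 0 ≤ halfCsch x := by
  have := Real.sinh_nonneg_iff.mpr (div_nonneg hx two_pos.le)
  unfold halfCsch
  positivity

theorem halfCsch_eq_exp_mul_inv (x : ℝ) :
    halfCsch x = Real.exp (-(1 / 2 * x)) * (1 - Real.exp (-x))⁻¹ := by
  have h : 1 - Real.exp (-x) = Real.exp (-(1 / 2 * x)) * (2 * Real.sinh (x / 2)) := by
    rw [Real.sinh_eq, mul_div_cancel₀ _ two_ne_zero, mul_sub, ← Real.exp_add, ← Real.exp_add]
    rw [show -(1 / 2 * x) + x / 2 = 0 by ring, show -(1 / 2 * x) + -(x / 2) = -x by ring,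
      Real.exp_zero]
  rw [h, mul_inv, mul_inv_cancel_left₀ (Real.exp_ne_zero _), halfCsch]

theorem hasSum_exp_neg_add_half_mul (hx : 0 < x) :
    HasSum (fun k : ℕ => Real.exp (-(k + 1 / 2) * x)) (halfCsch x) := by
  rw [halfCsch_eq_exp_mul_inv]
  convert! (hasSum_geometric_of_lt_one (Real.exp_pos (-x)).le
    (Real.exp_lt_one_iff.mpr (neg_neg_of_pos hx))).mul_left (Real.exp (-(1 / 2 * x))) using 2 with k
  rw [← Real.exp_nat_mul, ← Real.exp_add]
  ring_nf

theorem continuousOn_halfCsch : ContinuousOn halfCsch (Ioi 0) := by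
  refine ContinuousOn.inv₀ (by fun_prop) fun x hx => ?_
  exact (mul_pos two_pos (Real.sinh_pos_iff.mpr (half_pos hx))).ne'

theorem halfCsch_isBigO_atTop : halfCsch =O[atTop] fun x => Real.exp (-(1 / 2) * x) := by
  have hlim : Tendsto (fun x : ℝ => (1 - Real.exp (-x))⁻¹) atTop (𝓝 1) := by
    simpa using (Real.tendsto_exp_neg_atTop_nhds_zero.const_sub 1).inv₀ (by simp)
  refine ((isBigO_refl (fun x : ℝ => Real.exp (-(1 / 2) * x)) atTop).mul
    (hlim.isBigO_one ℝ)).congr (fun x => ?_) fun x => mul_one _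
  rw [halfCsch_eq_exp_mul_inv, neg_mul]

theorem halfCsch_isBigO_nhdsGT_zero : halfCsch =O[𝓝[>] 0] fun x => x ^ (-1 : ℝ) := by
  refine IsBigO.of_norm_eventuallyLE ?_
  filter_upwards [self_mem_nhdsWithin] with x (hx : 0 < x)
  rw [Real.norm_of_nonneg (halfCsch_nonneg hx.le), Real.rpow_neg_one, halfCsch]
  gcongr
  linarith [Real.self_le_sinh_iff.mpr (half_pos hx).le]

theorem locallyIntegrableOn_ofReal_halfCsch_comp_mul {p : ℝ} (hp : 0 < p) :
    LocallyIntegrableOn (fun v => (halfCsch (p * v) : ℂ)) (Ioi 0) := by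
  refine ContinuousOn.locallyIntegrableOn ?_ measurableSet_Ioi
  exact continuous_ofReal.comp_continuousOn
    (continuousOn_halfCsch.comp (by fun_prop) fun v hv => mul_pos hp hv)

theorem ofReal_halfCsch_comp_mul_isBigO_atTop {p : ℝ} (hp : 0 < p) :
    (fun v => (halfCsch (p * v) : ℂ)) =O[atTop] fun v => Real.exp (-(p / 2) * v) := by
  refine (isBigO_ofReal_left.mpr <|
    halfCsch_isBigO_atTop.comp_tendsto (tendsto_id.const_mul_atTop hp)).congr_right fun v => ?_
  simp only [Function.comp_apply, id_eq]
  ring_nf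

theorem mellinConvergent_ofReal_halfCsch_comp_mul {p : ℝ} (hp : 0 < p) {w : ℂ} (hw : 1 < w.re) :
    MellinConvergent (fun v => (halfCsch (p * v) : ℂ)) w :=
  (MellinConvergent.comp_mul_left (f := fun x => (halfCsch x : ℂ)) hp).mpr <|
    mellinConvergent_of_isBigO_rpow_exp one_half_pos
      (by simpa using locallyIntegrableOn_ofReal_halfCsch_comp_mul one_pos)
      (isBigO_ofReal_left.mpr halfCsch_isBigO_atTop)
      (isBigO_ofReal_left.mpr halfCsch_isBigO_nhdsGT_zero) hw

theorem hasSum_expInt (s : ℂ) {p : ℝ} (hp : 0 < p) :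
    HasSum (fun k : ℕ => expInt s (p * (k + 1 / 2)))
      (∫ v in Ioi (1 : ℝ), (v : ℂ) ^ (-s) * halfCsch (p * v)) := by
  let F (k : ℕ) (v : ℝ) : ℂ := (v : ℂ) ^ (-s) * exp (-(p * (k + 1 / 2)) * v)
  have hF_eq (k : ℕ) (v : ℝ) :
      F k v = (v : ℂ) ^ (-s) * (Real.exp (-(k + 1 / 2) * (p * v)) : ℝ) := by
    simp only [F, ofReal_exp]
    push_cast
    ring_nf
  have hF_norm (k : ℕ) (v : ℝ) :
      ‖F k v‖ = ‖(v : ℂ) ^ (-s)‖ * Real.exp (-(k + 1 / 2) * (p * v)) := by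
    rw [hF_eq, norm_mul, norm_real, Real.norm_of_nonneg (Real.exp_pos _).le]
  have hF_sum : ∀ v ∈ Ioi (1 : ℝ),
      HasSum (fun k : ℕ => Real.exp (-(k + 1 / 2) * (p * v))) (halfCsch (p * v)) := fun v hv =>
    hasSum_exp_neg_add_half_mul (mul_pos hp (one_pos.trans hv))
  have h_int : IntegrableOn (fun v : ℝ => (v : ℂ) ^ (-s) * halfCsch (p * v)) (Ioi 1) := by
    simpa only [sub_sub_cancel_left, smul_eq_mul] using
      integrableOn_Ioi_cpow_smul one_pos (half_pos hp)
        (locallyIntegrableOn_ofReal_halfCsch_comp_mul hp)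
        (ofReal_halfCsch_comp_mul_isBigO_atTop hp) (1 - s)
  refine hasSum_integral_of_dominated_convergence (F := F) (fun k v => ‖F k v‖) (fun k => ?_)
    (fun k => Eventually.of_forall fun v => le_rfl) ?_ ?_ ?_
  · exact Measurable.aestronglyMeasurable (by fun_prop)
  · filter_upwards [ae_restrict_mem measurableSet_Ioi] with v hv
    simpa only [hF_norm] using (hF_sum v hv).summable.mul_left _
  · refine h_int.norm.congr ?_
    filter_upwards [ae_restrict_mem measurableSet_Ioi] with v hv
    simp only [hF_norm, tsum_mul_left, (hF_sum v hv).tsum_eq, norm_mul, norm_real,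
      Real.norm_of_nonneg (halfCsch_nonneg (mul_pos hp (one_pos.trans hv)).le)]
  · filter_upwards [ae_restrict_mem measurableSet_Ioi] with v hv
    simpa only [hF_eq] using (hasSum_ofReal.mpr (hF_sum v hv)).mul_left _

end HalfCsch

section Zeta

variable {s w : ℂ}

theorem hasSum_one_div_odd_cpow (hw : 1 < w.re) :
    HasSum (fun k : ℕ => 1 / ((2 * k + 1 : ℕ) : ℂ) ^ w)
      ((1 - (2 : ℂ) ^ (-w)) * riemannZeta w) := by
  have hsum : Summable fun n : ℕ => 1 / (n : ℂ) ^ w := summable_one_div_nat_cpow.mpr hw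
  have hzeta : HasSum (fun n : ℕ => 1 / (n : ℂ) ^ w) (riemannZeta w) :=
    zeta_eq_tsum_one_div_nat_cpow hw ▸ hsum.hasSum
  have heven : HasSum (fun k : ℕ => 1 / ((2 * k : ℕ) : ℂ) ^ w)
      ((2 : ℂ) ^ (-w) * riemannZeta w) := by
    refine (hzeta.mul_left ((2 : ℂ) ^ (-w))).congr_fun fun k => ?_
    rw [Nat.cast_mul, natCast_mul_natCast_cpow, cpow_neg, one_div, mul_inv, one_div, Nat.cast_ofNat]
  have hodd : Summable fun k : ℕ => 1 / ((2 * k + 1 : ℕ) : ℂ) ^ w :=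
    hsum.comp_injective (i := fun k => 2 * k + 1) fun a b h => by simpa using h
  have htotal :=
    (HasSum.even_add_odd (f := fun n : ℕ => 1 / (n : ℂ) ^ w) heven hodd.hasSum).unique hzeta
  rw [sub_mul, one_mul, ← eq_sub_of_add_eq' htotal]
  exact hodd.hasSum

theorem hasSum_one_div_add_half_cpow (hw : 1 < w.re) :
    HasSum (fun k : ℕ => 1 / ((k + 1 / 2 : ℝ) : ℂ) ^ w) (((2 : ℂ) ^ w - 1) * riemannZeta w) := by
  have hpow (k : ℕ) : ((2 * k + 1 : ℕ) : ℂ) ^ w = (2 : ℂ) ^ w * ((k + 1 / 2 : ℝ) : ℂ) ^ w := by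
    rw [← ofReal_ofNat, ← mul_cpow_ofReal_nonneg zero_le_two (by positivity)]
    push_cast
    ring_nf
  have h2 : (2 : ℂ) ^ w ≠ 0 := by simp [cpow_eq_zero_iff]
  convert! (hasSum_one_div_odd_cpow hw).mul_left ((2 : ℂ) ^ w) using 1
  · ext k
    rw [hpow]
    field_simp
  · rw [cpow_neg]
    field_simp

theorem mellin_ofReal_halfCsch (hw : 1 < w.re) :
    mellin (fun x => (halfCsch x : ℂ)) w = Gamma w * (((2 : ℂ) ^ w - 1) * riemannZeta w) := by
  have hsum := hasSum_one_div_add_half_cpow hw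
  have key := hasSum_mellin (a := fun _ : ℕ => (1 : ℂ)) (p := fun k => k + 1 / 2)
    (F := fun x => (halfCsch x : ℂ)) (fun k => Or.inr (by positivity)) (one_pos.trans hw)
    (fun x hx => by simpa using hasSum_ofReal.mpr (hasSum_exp_neg_add_half_mul hx))
    (hsum.summable.norm.congr fun k => by
      rw [norm_div, norm_cpow_eq_rpow_re_of_pos (by positivity)])
  simp only [mul_div_assoc] at key
  exact key.unique (hsum.mul_left _)

theorem two_cpow_mul_riemannZeta_eq_neg_sin_mul_mellin (hs : s.re < 0) :
    (2 : ℂ) ^ (-s) * (1 - (2 : ℂ) ^ (1 - s)) * riemannZeta s =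
      -sin (π * s / 2) * mellin (fun v => (halfCsch (π * v) : ℂ)) (1 - s) := by
  have hw : 1 < (1 - s).re := by simpa [lt_sub_iff_add_lt] using hs
  have hfe : riemannZeta s =
      2 * (2 * π) ^ (s - 1) * Gamma (1 - s) * sin (π * s / 2) * riemannZeta (1 - s) := by
    have hnat (n : ℕ) : 1 - s ≠ -n := fun h => by
      have := congrArg re h
      simp only [neg_re, natCast_re] at this
      linarith [n.cast_nonneg (α := ℝ)]
    have hone : 1 - s ≠ 1 := fun h => by simp [h] at hw
    have hcos : cos (π * (1 - s) / 2) = sin (π * s / 2) := by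
      rw [← cos_pi_div_two_sub]
      ring_nf
    rw [← hcos, ← neg_sub 1 s, ← riemannZeta_one_sub hnat hone, sub_sub_cancel]
  have hpow : (2 : ℂ) ^ (-s) * (2 * (2 * π) ^ (s - 1)) = π ^ (s - 1) := by
    have h2 : (2 : ℂ) ^ (-s) * (2 * 2 ^ (s - 1)) = 1 := by
      rw [cpow_sub _ _ two_ne_zero, cpow_one, mul_div_cancel₀ _ two_ne_zero,
        ← cpow_add _ _ two_ne_zero, neg_add_cancel, cpow_zero]
    rw [← ofReal_ofNat, mul_cpow_ofReal_nonneg zero_le_two Real.pi_pos.le, ofReal_ofNat,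
      ← mul_assoc 2, ← mul_assoc, h2, one_mul]
  rw [mellin_comp_mul_left (fun x => (halfCsch x : ℂ)) _ Real.pi_pos, mellin_ofReal_halfCsch hw,
    hfe, smul_eq_mul, neg_sub, ← hpow]
  ring

end Zeta

section Contour

/-- The pull-back under `z = exp w` of the form `z ^ (-s) dz / sin (π z / 2)`. The logarithmic
coordinate `w` turns the half-disc `‖z‖ ≤ 1`, `0 ≤ re z` into the half-strip `re w ≤ 0`,
`|im w| ≤ π / 2`. -/
noncomputable def cscExp (s w : ℂ) : ℂ := exp ((1 - s) * w) / sin (π * exp w / 2)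

variable {s z w : ℂ}

theorem sin_pi_mul_div_two_ne_zero (hz : z ≠ 0) (hz' : ‖z‖ < 2) : sin (π * z / 2) ≠ 0 := by
  rw [Complex.sin_ne_zero_iff]
  intro k hk
  have hk : z = 2 * k := by
    have : (π : ℂ) ≠ 0 := ofReal_ne_zero.mpr Real.pi_ne_zero
    field_simp at hk
    linear_combination hk
  have hk0 : k ≠ 0 := by
    rintro rfl
    simp [hk] at hz
  have : (1 : ℝ) ≤ |(k : ℝ)| := mod_cast Int.one_le_abs hk0
  rw [hk, norm_mul, norm_intCast, Complex.norm_ofNat] at hz'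
  linarith

theorem sin_pi_mul_exp_div_two_ne_zero (hw : w.re ≤ 0) : sin (π * exp w / 2) ≠ 0 := by
  refine sin_pi_mul_div_two_ne_zero (exp_ne_zero w) ?_
  rw [norm_exp]
  linarith [Real.exp_le_one_iff.mpr hw]

theorem differentiableAt_cscExp (hw : w.re ≤ 0) : DifferentiableAt ℂ (cscExp s) w := by
  have := sin_pi_mul_exp_div_two_ne_zero hw
  unfold cscExp
  fun_prop (disch := assumption)

theorem continuous_cscExp_mul_I (s : ℂ) : Continuous fun θ : ℝ => cscExp s (θ * I) :=
  continuous_iff_continuousAt.mpr fun θ =>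
    (differentiableAt_cscExp (by simp)).continuousAt.comp
      (f := fun θ : ℝ => (θ : ℂ) * I) (by fun_prop)

theorem cscExp_add_pi_mul_I (s w : ℂ) : cscExp s (w + π * I) = exp (-(π * s) * I) * cscExp s w := by
  have hexp : exp ((1 - s) * (w + π * I)) = -(exp (-(π * s) * I) * exp ((1 - s) * w)) := by
    rw [show (1 - s) * (w + π * I) = -(π * s) * I + (1 - s) * w + π * I by ring, exp_add_pi_mul_I,
      exp_add]
  rw [cscExp, hexp, exp_add_pi_mul_I, mul_neg, neg_div (2 : ℂ), sin_neg, neg_div_neg_eq,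
    mul_div_assoc, cscExp]

theorem cscExp_ofReal_sub_pi_div_two_mul_I (s : ℂ) (x : ℝ) :
    cscExp s (x - π / 2 * I) =
      exp (π * s / 2 * I) * (2 * (exp ((1 - s) * x) * halfCsch (π * Real.exp x))) := by
  have hnum : exp ((1 - s) * (x - π / 2 * I)) = exp (π * s / 2 * I) * exp ((1 - s) * x) * -I := by
    rw [← exp_neg_pi_div_two_mul_I, ← exp_add, ← exp_add]
    ring_nf
  have hden : sin (π * exp (x - π / 2 * I) / 2) = -I * Real.sinh (π * Real.exp x / 2) := by
    rw [sub_eq_add_neg, ← neg_mul, ← neg_div, exp_add, exp_neg_pi_div_two_mul_I,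
      show π * (exp x * -I) / 2 = -((π * Real.exp x / 2 : ℝ) * I) by push_cast; ring, sin_neg,
      sin_mul_I, ← ofReal_sinh]
    ring
  rw [cscExp, hnum, hden, mul_comm (-I), mul_div_mul_right _ _ (neg_ne_zero.mpr I_ne_zero),
    halfCsch]
  push_cast
  ring

theorem cscExp_sub_cscExp_add_pi_div_two_mul_I (s : ℂ) (x : ℝ) :
    cscExp s (x - π / 2 * I) - cscExp s (x + π / 2 * I) =
      4 * I * sin (π * s / 2) * (exp ((1 - s) * x) * halfCsch (π * Real.exp x)) := by
  rw [show (x + π / 2 * I : ℂ) = x - π / 2 * I + π * I by ring, cscExp_add_pi_mul_I,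
    cscExp_ofReal_sub_pi_div_two_mul_I, ← mul_assoc (exp (-(π * s) * I)), ← exp_add,
    show -(π * s) * I + π * s / 2 * I = -(π * s / 2) * I by ring, sin]
  ring_nf
  simp only [I_sq]
  ring

theorem integral_cscExp_mul_I_eq_sub (s : ℂ) {x : ℝ} (hx : x ≤ 0) :
    ∫ θ in -(π / 2)..π / 2, cscExp s (θ * I) =
      (∫ θ in -(π / 2)..π / 2, cscExp s (x + θ * I)) -
        4 * sin (π * s / 2) * ∫ t in x..0, exp ((1 - s) * t) * halfCsch (π * Real.exp t) := by
  have hdiff : DifferentiableOn ℂ (cscExp s) (uIcc x 0 ×ℂ uIcc (-(π / 2)) (π / 2)) := fun w hw =>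
    (differentiableAt_cscExp (uIcc_of_le hx ▸ hw.1 : w.re ∈ Icc x 0).2).differentiableWithinAt
  have hrect := integral_boundary_rect_eq_zero_of_differentiableOn (cscExp s)
    ⟨x, -(π / 2)⟩ ⟨0, π / 2⟩ hdiff
  have hedge (a : ℝ) : IntervalIntegrable (fun t : ℝ => cscExp s (t + a * I)) volume x 0 := by
    refine ContinuousOn.intervalIntegrable fun t ht => ContinuousAt.continuousWithinAt ?_
    have hre : (t + a * I).re ≤ 0 := by simpa using (uIcc_of_le hx ▸ ht).2
    exact (differentiableAt_cscExp hre).continuousAt.comp (f := fun t : ℝ => t + a * I)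
      (by fun_prop)
  simp only [ofReal_zero, zero_add, smul_eq_mul] at hrect
  rw [← intervalIntegral.integral_sub (hedge _) (hedge _)] at hrect
  push_cast at hrect
  simp only [neg_mul, ← sub_eq_add_neg, cscExp_sub_cscExp_add_pi_div_two_mul_I,
    intervalIntegral.integral_const_mul] at hrect
  apply mul_left_cancel₀ I_ne_zero
  linear_combination hrect

theorem isBigO_sin_pi_mul_div_two : (fun z : ℂ => z) =O[𝓝 0] fun z => sin (π * z / 2) := by
  have hderiv : HasDerivAt (fun z : ℂ => sin (π * z / 2)) (π / 2) 0 := by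
    simpa using (((hasDerivAt_id (0 : ℂ)).const_mul (π : ℂ)).div_const 2).csin
  simpa [Function.comp_def] using (hderiv.isTheta_sub (by simp)).isBigO_symm

theorem exists_norm_cscExp_le (s : ℂ) : ∃ C, ∀ᶠ x : ℝ in atBot, ∀ y : ℝ,
    ‖cscExp s (x + y * I)‖ ≤ C * Real.exp (-s.re * x + s.im * y) := by
  obtain ⟨C, hC, hbound⟩ := isBigO_sin_pi_mul_div_two.exists_nonneg
  obtain ⟨δ, hδ, hball⟩ := Metric.eventually_nhds_iff.mp hbound.bound
  refine ⟨C, ?_⟩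
  filter_upwards [Real.tendsto_exp_atBot.eventually_lt_const hδ] with x hx y
  have hnorm : ‖exp (x + y * I)‖ = Real.exp x := by simp [norm_exp]
  have hnum : ‖exp ((1 - s) * (x + y * I))‖ =
      Real.exp (-s.re * x + s.im * y) * ‖exp (x + y * I)‖ := by
    rw [hnorm, norm_exp, ← Real.exp_add]
    congr 1
    simp only [mul_re, sub_re, sub_im, one_re, one_im, add_re, add_im, ofReal_re, ofReal_im, I_re,
      I_im, mul_im]
    ring
  have hsin := hball (y := exp (x + y * I)) (by rwa [dist_zero_right, hnorm])
  rw [cscExp, norm_div, hnum]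
  refine div_le_of_le_mul₀ (norm_nonneg _) (by positivity) ?_
  calc Real.exp (-s.re * x + s.im * y) * ‖exp (x + y * I)‖
      ≤ Real.exp (-s.re * x + s.im * y) * (C * ‖sin (π * exp (x + y * I) / 2)‖) := by gcongr
    _ = C * Real.exp (-s.re * x + s.im * y) * ‖sin (π * exp (x + y * I) / 2)‖ := by ring

theorem tendsto_integral_cscExp_atBot (hs : s.re < 0) (a : ℝ) :
    Tendsto (fun x : ℝ => ∫ θ in -a..a, cscExp s (x + θ * I)) atBot (𝓝 0) := by
  obtain ⟨C, hC⟩ := exists_norm_cscExp_le s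
  have hC_im : ∀ᶠ x : ℝ in atBot, ‖∫ θ in -a..a, cscExp s (x + θ * I)‖ ≤
      |C| * Real.exp (-s.re * x + |s.im| * |a|) * |a - -a| := by
    filter_upwards [hC] with x hx
    refine intervalIntegral.norm_integral_le_of_norm_le_const fun θ hθ => (hx θ).trans ?_
    have hθ' : |θ| ≤ |a| := by
      rw [mem_uIoc] at hθ
      grind
    have him : s.im * θ ≤ |s.im| * |a| :=
      (le_abs_self _).trans (abs_mul s.im θ ▸ by gcongr)
    gcongr
    exact le_abs_self C
  refine squeeze_zero_norm' hC_im ?_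
  have hexp : Tendsto (fun x : ℝ => Real.exp (-s.re * x + |s.im| * |a|)) atBot (𝓝 0) :=
    Real.tendsto_exp_atBot.comp <|
      tendsto_atBot_add_const_right _ _ (tendsto_id.const_mul_atBot (neg_pos.mpr hs))
  simpa using (hexp.const_mul |C|).mul_const |a - -a|

theorem integral_cscExp_mul_I (hs : s.re < 0) :
    ∫ θ in -(π / 2)..π / 2, cscExp s (θ * I) =
      -(4 * sin (π * s / 2) * ∫ v in Ioc (0 : ℝ) 1, (v : ℂ) ^ (-s) * halfCsch (π * v)) := by
  have hconv : MellinConvergent (fun v => (halfCsch (π * v) : ℂ)) (1 - s) :=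
    mellinConvergent_ofReal_halfCsch_comp_mul Real.pi_pos (by simpa [lt_sub_iff_add_lt] using hs)
  have h_int : IntegrableOn (fun t : ℝ => exp ((1 - s) * t) * halfCsch (π * Real.exp t)) (Iic 0) :=
    (integrableOn_Ioc_cpow_smul_iff_integrableOn_Iic_exp
      (fun v => (halfCsch (π * v) : ℂ)) (1 - s) 0).mp (hconv.mono_set Ioc_subset_Ioi_self)
  have hsubst := integral_Ioc_cpow_smul_eq_integral_Iic_exp
    (fun v => (halfCsch (π * v) : ℂ)) (1 - s) 0
  simp only [Real.exp_zero, sub_sub_cancel_left, smul_eq_mul] at hsubst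
  have hlim := (tendsto_integral_cscExp_atBot hs (π / 2)).sub <|
    (intervalIntegral_tendsto_integral_Iic 0 h_int tendsto_id).const_mul (4 * sin (π * s / 2))
  rw [zero_sub, ← hsubst] at hlim
  refine tendsto_nhds_unique_of_eventuallyEq tendsto_const_nhds hlim ?_
  filter_upwards [eventually_le_atBot 0] with x hx
  exact integral_cscExp_mul_I_eq_sub s hx

end Contour

section Arc

/-- The denominator `cosh (π sin θ) - cos (π cos θ)` of the arc integral, up to a factor `2` the
product of `sin (π z / 2)` at `z = exp (± i θ)`. -/
noncomputable def arcDenom (θ : ℝ) : ℂ := Real.cosh (π * Real.sin θ) - Real.cos (π * Real.cos θ)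

/-- The integrand of the arc integral. -/
noncomputable def arcIntegrand (s : ℂ) (θ : ℝ) : ℂ :=
  Real.exp (-(π / 2) * Real.sin θ) * sin (π / 2 * Real.cos θ + (s - 1) * θ) / arcDenom θ

theorem pi_mul_exp_mul_I_div_two (θ : ℝ) :
    π * exp (θ * I) / 2 = π / 2 * Real.cos θ + π / 2 * Real.sin θ * I := by
  rw [exp_mul_I, ofReal_cos, ofReal_sin]
  ring

theorem arcDenom_eq (θ : ℝ) :
    arcDenom θ = 2 * sin (π * exp (θ * I) / 2) * sin (π * exp ((-θ : ℝ) * I) / 2) := by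
  rw [arcDenom, ofReal_cosh, ofReal_cos (π * Real.cos θ), ← cos_mul_I, cos_sub_cos,
    pi_mul_exp_mul_I_div_two, pi_mul_exp_mul_I_div_two, Real.cos_neg, Real.sin_neg, mul_assoc,
    neg_mul, ← mul_neg, ← mul_neg, ← sin_neg]
  push_cast
  ring_nf

theorem arcDenom_ne_zero (θ : ℝ) : arcDenom θ ≠ 0 := by
  rw [arcDenom_eq]
  exact mul_ne_zero (mul_ne_zero two_ne_zero (sin_pi_mul_exp_div_two_ne_zero (by simp)))
    (sin_pi_mul_exp_div_two_ne_zero (by simp))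

theorem arcDenom_neg (θ : ℝ) : arcDenom (-θ) = arcDenom θ := by
  simp [arcDenom]

theorem continuous_arcDenom : Continuous arcDenom := by
  unfold arcDenom
  fun_prop

theorem exp_mul_sin_sub_add_exp_mul_sin_add (x y a : ℂ) :
    exp (-a * I) * sin (x - y * I) + exp (a * I) * sin (x + y * I) =
      exp (-y) * sin (x + a) + exp y * sin (x - a) := by
  simp only [sin, ← mul_assoc, ← mul_div_assoc, mul_sub, sub_mul, ← exp_add]
  ring_nf
  simp only [I_sq]
  ring_nf

theorem cscExp_mul_I_add_cscExp_neg_mul_I (s : ℂ) (θ : ℝ) :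
    cscExp s (θ * I) + cscExp s ((-θ : ℝ) * I) =
      2 * arcIntegrand s θ + 2 * arcIntegrand s (-θ) := by
  have hpos : sin (π * exp (θ * I) / 2) ≠ 0 := sin_pi_mul_exp_div_two_ne_zero (by simp)
  have hneg : sin (π * exp ((-θ : ℝ) * I) / 2) ≠ 0 := sin_pi_mul_exp_div_two_ne_zero (by simp)
  have hnum : exp ((1 - s) * (θ * I)) * sin (π * exp ((-θ : ℝ) * I) / 2) +
      sin (π * exp (θ * I) / 2) * exp ((1 - s) * ((-θ : ℝ) * I)) =
      Real.exp (-(π / 2) * Real.sin θ) * sin (π / 2 * Real.cos θ + (s - 1) * θ) +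
        Real.exp (-(π / 2) * Real.sin (-θ)) *
          sin (π / 2 * Real.cos (-θ) + (s - 1) * (-θ : ℝ)) := by
    have h := exp_mul_sin_sub_add_exp_mul_sin_add
      (π / 2 * Real.cos θ) (π / 2 * Real.sin θ) ((s - 1) * θ)
    rw [pi_mul_exp_mul_I_div_two, pi_mul_exp_mul_I_div_two, Real.cos_neg, Real.sin_neg]
    push_cast at h ⊢
    convert! h using 2 <;> ring_nf
  rw [arcIntegrand, arcIntegrand, arcDenom_neg, arcDenom_eq, cscExp, cscExp,
    div_add_div _ _ hpos hneg, hnum, ← mul_add, ← add_div, mul_assoc 2, ← mul_div_assoc,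
    mul_div_mul_left _ _ two_ne_zero]

theorem continuous_arcIntegrand (s : ℂ) : Continuous (arcIntegrand s) := by
  unfold arcIntegrand
  exact Continuous.div (by fun_prop) continuous_arcDenom arcDenom_ne_zero

theorem integral_cscExp_mul_I_eq_two_mul_integral_arcIntegrand (s : ℂ) (a : ℝ) :
    ∫ θ in -a..a, cscExp s (θ * I) = 2 * ∫ θ in -a..a, arcIntegrand s θ := by
  rw [← intervalIntegral.integral_const_mul]
  exact intervalIntegral_neg_congr_of_add_comp_neg
    ((continuous_cscExp_mul_I s).intervalIntegrable _ _)
    ((continuous_arcIntegrand s).const_mul 2 |>.intervalIntegrable _ _)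
    (cscExp_mul_I_add_cscExp_neg_mul_I s)

theorem differentiable_integral_arcIntegrand (a b : ℝ) :
    Differentiable ℂ fun s => ∫ θ in a..b, arcIntegrand s θ := by
  refine differentiable_intervalIntegral_of_continuous_deriv a b continuous_arcIntegrand
    (F' := fun s θ => Real.exp (-(π / 2) * Real.sin θ) *
      (cos (π / 2 * Real.cos θ + (s - 1) * θ) * θ) / arcDenom θ) ?_ fun s θ => ?_
  · exact Continuous.div (by fun_prop) (continuous_arcDenom.comp continuous_snd)
      fun p => arcDenom_ne_zero p.2
  · have harg : HasDerivAt (fun s : ℂ => (π / 2 * Real.cos θ + (s - 1) * θ : ℂ)) θ s := by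
      simpa using (((hasDerivAt_id s).sub_const 1).mul_const (θ : ℂ)).const_add
        (π / 2 * Real.cos θ : ℂ)
    exact (harg.csin.const_mul _).div_const _

end Arc

section Continuation

variable {s : ℂ}

theorem two_cpow_mul_riemannZeta_eq_of_re_neg (hs : s.re < 0) :
    (2 : ℂ) ^ (-s) * (1 - (2 : ℂ) ^ (1 - s)) * riemannZeta s =
      -sin (π * s / 2) * (∫ v in Ioi (1 : ℝ), (v : ℂ) ^ (-s) * halfCsch (π * v)) +
        1 / 2 * ∫ θ in -(π / 2)..π / 2, arcIntegrand s θ := by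
  have hconv : MellinConvergent (fun v => (halfCsch (π * v) : ℂ)) (1 - s) :=
    mellinConvergent_ofReal_halfCsch_comp_mul Real.pi_pos (by simpa [lt_sub_iff_add_lt] using hs)
  have harc := integral_cscExp_mul_I hs
  rw [integral_cscExp_mul_I_eq_two_mul_integral_arcIntegrand] at harc
  rw [two_cpow_mul_riemannZeta_eq_neg_sin_mul_mellin hs,
    mellin_eq_integral_Ioc_add_integral_Ioi zero_le_one hconv]
  simp only [sub_sub_cancel_left, smul_eq_mul]
  linear_combination (-1 / 4) * harc

theorem differentiable_integral_Ioi_one_halfCsch {p : ℝ} (hp : 0 < p) :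
    Differentiable ℂ fun s : ℂ => ∫ v in Ioi (1 : ℝ), (v : ℂ) ^ (-s) * halfCsch (p * v) := by
  simpa only [Function.comp_def, id_eq, sub_sub_cancel_left, smul_eq_mul] using
    (differentiable_setIntegral_Ioi_cpow_smul one_pos (half_pos hp)
      (locallyIntegrableOn_ofReal_halfCsch_comp_mul hp)
      (ofReal_halfCsch_comp_mul_isBigO_atTop hp)).comp (differentiable_id.const_sub (1 : ℂ))

theorem two_cpow_mul_riemannZeta_eq (hs : s ≠ 1) :
    (2 : ℂ) ^ (-s) * (1 - (2 : ℂ) ^ (1 - s)) * riemannZeta s =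
      -sin (π * s / 2) * (∫ v in Ioi (1 : ℝ), (v : ℂ) ^ (-s) * halfCsch (π * v)) +
        1 / 2 * ∫ θ in -(π / 2)..π / 2, arcIntegrand s θ := by
  have hleft : DifferentiableOn ℂ
      (fun s => (2 : ℂ) ^ (-s) * (1 - (2 : ℂ) ^ (1 - s)) * riemannZeta s) {1}ᶜ := fun z hz => by
    have := differentiableAt_riemannZeta hz
    refine DifferentiableAt.differentiableWithinAt ?_
    fun_prop (disch := simp)
  have hright : Differentiable ℂ fun s : ℂ =>
      -sin (π * s / 2) * (∫ v in Ioi (1 : ℝ), (v : ℂ) ^ (-s) * halfCsch (π * v)) +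
        1 / 2 * ∫ θ in -(π / 2)..π / 2, arcIntegrand s θ := by
    have := differentiable_integral_Ioi_one_halfCsch Real.pi_pos
    have := differentiable_integral_arcIntegrand (-(π / 2)) (π / 2)
    fun_prop
  have hnhds : ∀ᶠ z : ℂ in 𝓝 (-1), z.re < 0 :=
    continuous_re.continuousAt.eventually_lt_const (by simp)
  exact (hleft.analyticOnNhd isOpen_compl_singleton).eqOn_of_preconnected_of_eventuallyEq
    (hright.differentiableOn.analyticOnNhd isOpen_compl_singleton)
    (isConnected_compl_singleton_of_one_lt_rank (by simp) 1).isPreconnected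
    (by norm_num : (-1 : ℂ) ∈ ({1}ᶜ : Set ℂ))
    (hnhds.mono fun z hz => two_cpow_mul_riemannZeta_eq_of_re_neg hz) hs

end Continuation

end

/-- For every complex `s ≠ 1`,
`2^{-s}(1 - 2^{1-s}) ζ(s) = -sin(πs/2) ∑_{k=0}^∞ E_s(π(k+1/2))
  + (1/2) ∫_{-π/2}^{π/2} e^{-(π/2) sin θ} sin((π/2) cos θ + (s-1)θ)
      / (cosh(π sin θ) - cos(π cos θ)) dθ`,
where the series converges absolutely. -/
theorem stmt_11 (s : ℂ) (hs : s ≠ 1) :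
    Summable (fun k : ℕ => expInt s ((Real.pi : ℂ) * ((k : ℂ) + 1/2))) ∧
    (2 : ℂ) ^ (-s) * (1 - (2 : ℂ) ^ (1 - s)) * riemannZeta s =
      -Complex.sin ((Real.pi : ℂ) * s / 2) *
          ∑' k : ℕ, expInt s ((Real.pi : ℂ) * ((k : ℂ) + 1/2))
      + (1/2) * ∫ θ in (-(Real.pi/2))..(Real.pi/2),
          (Real.exp (-(Real.pi/2) * Real.sin θ) : ℂ) *
            Complex.sin ((Real.pi : ℂ)/2 * (Real.cos θ : ℂ) + (s - 1) * (θ : ℂ)) /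
            ((Real.cosh (Real.pi * Real.sin θ) : ℂ) - (Real.cos (Real.pi * Real.cos θ) : ℂ)) := by
  refine ⟨(hasSum_expInt s Real.pi_pos).summable, ?_⟩
  rw [(hasSum_expInt s Real.pi_pos).tsum_eq]
  exact two_cpow_mul_riemannZeta_eq hs
end
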